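/- arXiv:1912.09432 — 9 statements merged into one kernel-verified Lean document; each statement's English description precedes it below -/
import Mathlib

section
/- Fix α, β ≥ 0 and define F(t₁,t₂) := E[exp(−α H₁(t₁) − β H₂(t₂))]. Then for all t₁, t₂ > 0 with t₁ ≠ t₂, both partial derivatives of F exist at (t₁,t₂) and satisfy (∂F/∂t₁)(t₁,t₂) + (∂F/∂t₂)(t₁,t₂) = −S(α,β)·F(t₁,t₂). -/
open MeasureTheory ProbabilityTheory

/-- For fixed `α, β ≥ 0`, the function
`F(t₁,t₂) = E[exp(−α H₁(t₁) − β H₂(t₂))]` has both partial derivatives at every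
point with `t₁, t₂ > 0`, `t₁ ≠ t₂`, and their sum equals `−S(α,β)·F(t₁,t₂)`. -/
theorem biparameter_laplace_governing_equation
    {Ω : Type*} [MeasurableSpace Ω] (P : Measure Ω) [IsProbabilityMeasure P]
    (H1 H2 : ℝ → Ω → ℝ) (S : ℝ → ℝ → ℝ)
    (hH1meas : Measurable (Function.uncurry H1))
    (hH2meas : Measurable (Function.uncurry H2))
    (hH1nonneg : ∀ x ω, 0 ≤ H1 x ω) (hH2nonneg : ∀ x ω, 0 ≤ H2 x ω)
    (hzero : ∀ᵐ ω ∂P, H1 0 ω = 0 ∧ H2 0 ω = 0)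
    (hSnonneg : ∀ α β : ℝ, 0 ≤ α → 0 ≤ β → 0 ≤ S α β)
    (hindep : ∀ s t : ℝ, 0 ≤ s → s ≤ t →
      IndepFun (fun ω => (H1 t ω - H1 s ω, H2 t ω - H2 s ω))
        (fun ω => (H1 s ω, H2 s ω)) P)
    (hincr : ∀ s t α β : ℝ, 0 ≤ s → s ≤ t → 0 ≤ α → 0 ≤ β →
      ∫ ω, Real.exp (-(α * (H1 t ω - H1 s ω)) - β * (H2 t ω - H2 s ω)) ∂P
        = Real.exp (-(t - s) * S α β))
    (α β : ℝ) (hα : 0 ≤ α) (hβ : 0 ≤ β)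
    (F : ℝ → ℝ → ℝ)
    (hF : ∀ t1 t2 : ℝ, F t1 t2 = ∫ ω, Real.exp (-(α * H1 t1 ω) - β * H2 t2 ω) ∂P)
    (t1 t2 : ℝ) (ht1 : 0 < t1) (ht2 : 0 < t2) (hne : t1 ≠ t2) :
    ∃ d1 d2 : ℝ,
      HasDerivAt (fun s => F s t2) d1 t1 ∧
      HasDerivAt (fun s => F t1 s) d2 t2 ∧
      d1 + d2 = -S α β * F t1 t2 := by
  have m1 : ∀ t, Measurable (H1 t) := fun t => hH1meas.comp measurable_prodMk_left
  have m2 : ∀ t, Measurable (H2 t) := fun t => hH2meas.comp measurable_prodMk_left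
  have h0 : ∀ s, 0 ≤ s → ∫ ω, Real.exp (-(α * H1 s ω) - β * H2 s ω) ∂P
      = Real.exp (-s * S α β) := by
    intro s hs
    have h := hincr 0 s α β le_rfl hs hα hβ
    rw [sub_zero] at h
    rw [← h]
    apply integral_congr_ae
    filter_upwards [hzero] with ω hω
    simp [hω.1, hω.2]
  have key : ∀ s t c d : ℝ, 0 ≤ s → s ≤ t → 0 ≤ c → 0 ≤ d →
      ∫ ω, Real.exp (-(c * (H1 t ω - H1 s ω)) - d * (H2 t ω - H2 s ω)) *
        Real.exp (-(α * H1 s ω) - β * H2 s ω) ∂P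
      = Real.exp (-(t - s) * S c d) * Real.exp (-s * S α β) := by
    intro s t c d hs hst hc hd
    have hm : ∀ a b : ℝ, Measurable (fun p : ℝ × ℝ => Real.exp (-(a * p.1) - b * p.2)) := by
      intro a b
      fun_prop
    have hi := (hindep s t hs hst).comp (hm c d) (hm α β)
    have n1 := m1 s
    have n2 := m2 s
    have n3 := m1 t
    have n4 := m2 t
    rw [← h0 s hs, ← hincr s t c d hs hst hc hd]
    exact hi.integral_fun_mul_eq_mul_integral
      ((hm c d).comp ((n3.sub n1).prodMk (n4.sub n2))).aestronglyMeasurable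
      ((hm α β).comp (n1.prodMk n2)).aestronglyMeasurable
  have F1 : ∀ s t, 0 ≤ s → s ≤ t →
      F s t = Real.exp (-(t - s) * S 0 β + -s * S α β) := by
    intro s t hs hst
    rw [hF, Real.exp_add, ← key s t 0 β hs hst le_rfl hβ]
    congr 1
    funext ω
    rw [← Real.exp_add]
    congr 1
    ring
  have F2 : ∀ s t, 0 ≤ s → s ≤ t →
      F t s = Real.exp (-(t - s) * S α 0 + -s * S α β) := by
    intro s t hs hst
    rw [hF, Real.exp_add, ← key s t α 0 hs hst hα le_rfl]
    congr 1
    funext ω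
    rw [← Real.exp_add]
    congr 1
    ring
  have D : ∀ a b x : ℝ, HasDerivAt (fun s => Real.exp (a * s + b))
      (a * Real.exp (a * x + b)) x := by
    intro a b x
    have := (((hasDerivAt_id x).const_mul a).add_const b).exp
    simpa [mul_comm] using this
  rcases lt_or_gt_of_ne hne with h | h
  · refine ⟨(S 0 β - S α β) * F t1 t2, -S 0 β * F t1 t2, ?_, ?_, by ring⟩
    · have e : (fun s => F s t2) =ᶠ[nhds t1]
          fun s => Real.exp ((S 0 β - S α β) * s + -t2 * S 0 β) := by
        filter_upwards [Ioo_mem_nhds ht1 h] with s hs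
        rw [F1 s t2 hs.1.le hs.2.le]
        congr 1
        ring
      rw [e.eq_of_nhds]
      exact (D _ _ _).congr_of_eventuallyEq e
    · have e : (fun s => F t1 s) =ᶠ[nhds t2]
          fun s => Real.exp (-S 0 β * s + (t1 * S 0 β - t1 * S α β)) := by
        filter_upwards [Ioi_mem_nhds h] with s hs
        rw [F1 t1 s ht1.le (le_of_lt hs)]
        congr 1
        ring
      have e' := e.eq_of_nhds
      rw [e']
      exact (D _ _ _).congr_of_eventuallyEq e
  · refine ⟨-S α 0 * F t1 t2, (S α 0 - S α β) * F t1 t2, ?_, ?_, by ring⟩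
    · have e : (fun s => F s t2) =ᶠ[nhds t1]
          fun s => Real.exp (-S α 0 * s + (t2 * S α 0 - t2 * S α β)) := by
        filter_upwards [Ioi_mem_nhds h] with s hs
        rw [F2 t2 s ht2.le (le_of_lt hs)]
        congr 1
        ring
      rw [e.eq_of_nhds]
      exact (D _ _ _).congr_of_eventuallyEq e
    · have e : (fun s => F t1 s) =ᶠ[nhds t2]
          fun s => Real.exp ((S α 0 - S α β) * s + -t1 * S α 0) := by
        filter_upwards [Ioo_mem_nhds ht2 h] with s hs
        rw [F2 s t1 hs.1.le hs.2.le]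
        congr 1
        ring
      have e' := e.eq_of_nhds
      rw [e']
      exact (D _ _ _).congr_of_eventuallyEq e
end

section
/- For all η₁, η₂ > 0, the double Laplace transform of the tail of the Lévy measure satisfies ∫₀^∞ ∫₀^∞ e^{−η₁t₁−η₂t₂} φ̄(t₁,t₂) dt₁ dt₂ = (T₁(η₁) + T₂(η₂) − S(η₁,η₂)) / (η₁ η₂). -/
open MeasureTheory

lemma aux_int (η x : ℝ) (hη : 0 < η) :
    ∫ t in (0:ℝ)..x, Real.exp (-(η * t)) = (1 - Real.exp (-(η * x))) / η := by
  have h : ∀ t ∈ Set.uIcc 0 x, HasDerivAt (fun t => -Real.exp (-(η * t)) / η)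
      (Real.exp (-(η * t))) t := by
    intro t _
    have h1 : HasDerivAt (fun t : ℝ => -(η * t)) (-(η * 1)) t :=
      ((hasDerivAt_id t).const_mul η).neg
    refine (h1.exp.neg.div_const η).congr_deriv ?_
    field_simp
  rw [intervalIntegral.integral_eq_sub_of_hasDerivAt h
    ((by fun_prop : Continuous fun t : ℝ => Real.exp (-(η * t))).intervalIntegrable _ _)]
  simp
  ring

lemma aux_layer {α : Type*} [MeasurableSpace α] (μ : Measure α) (X : α → ℝ)
    (hX : Measurable X) (h0 : 0 ≤ᵐ[μ] X) (η : ℝ) (hη : 0 < η) :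
    ∫⁻ t in Set.Ioi (0:ℝ), ENNReal.ofReal (Real.exp (-(η * t))) * μ {a | t < X a}
      = ∫⁻ a, ENNReal.ofReal ((1 - Real.exp (-(η * X a))) / η) ∂μ := by
  have := lintegral_comp_eq_lintegral_meas_lt_mul μ h0 hX.aemeasurable
    (g := fun t => Real.exp (-(η * t)))
    (fun t _ => (by fun_prop : Continuous fun t : ℝ => Real.exp (-(η * t))).intervalIntegrable _ _)
    (Filter.Eventually.of_forall fun t => (Real.exp_pos _).le)
  simp only [aux_int _ _ hη] at this
  rw [this]
  simp only [mul_comm]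

lemma aux_meas {α : Type*} [MeasurableSpace α] (μ : Measure α) (X : α → ℝ) (η : ℝ) :
    Measurable fun t : ℝ => ENNReal.ofReal (Real.exp (-(η * t))) * μ {a | t < X a} := by
  have : Antitone fun t : ℝ => μ {a | t < X a} :=
    fun s t hst => measure_mono fun a (ha : t < X a) => lt_of_le_of_lt hst ha
  exact (by fun_prop : Measurable fun t : ℝ => ENNReal.ofReal (Real.exp (-(η * t)))).mul
    this.measurable

lemma aux_layer_real {α : Type*} [MeasurableSpace α] (μ : Measure α) (X : α → ℝ)
    (hX : Measurable X) (h0 : 0 ≤ᵐ[μ] X) (η : ℝ) (hη : 0 < η)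
    (hfin : ∀ t, 0 < t → μ {a | t < X a} < ⊤) :
    ∫ t in Set.Ioi (0:ℝ), Real.exp (-(η * t)) * (μ {a | t < X a}).toReal
      = (∫⁻ a, ENNReal.ofReal ((1 - Real.exp (-(η * X a))) / η) ∂μ).toReal := by
  rw [← aux_layer μ X hX h0 η hη, ← integral_toReal (aux_meas μ X η).aemeasurable]
  · simp [ENNReal.toReal_mul, ENNReal.toReal_ofReal (Real.exp_pos _).le]
  · filter_upwards [ae_restrict_mem measurableSet_Ioi] with t ht
    exact ENNReal.mul_lt_top ENNReal.ofReal_lt_top (hfin t ht)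

lemma aux_integrable {α : Type*} [MeasurableSpace α] (μ : Measure α) (X : α → ℝ)
    (hX : Measurable X) (h0 : 0 ≤ᵐ[μ] X) (η : ℝ) (hη : 0 < η)
    (hint : ∫⁻ p, ENNReal.ofReal (min (X p) 1) ∂μ < ⊤) :
    Integrable (fun a => 1 - Real.exp (-(η * X a))) μ := by
  have hm : Integrable (fun a => min (X a) 1) μ := by
    refine ⟨(by fun_prop : Measurable fun a => min (X a) 1).aestronglyMeasurable, ?_⟩
    rw [hasFiniteIntegral_iff_ofReal]
    · exact hint
    · filter_upwards [h0] with a ha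
      exact le_min ha zero_le_one
  refine (hm.const_mul (max η 1)).mono'
    (by fun_prop : Measurable fun a => 1 - Real.exp (-(η * X a))).aestronglyMeasurable ?_
  filter_upwards [h0] with a ha
  have ha : 0 ≤ X a := ha
  have h1 : Real.exp (-(η * X a)) ≤ 1 := Real.exp_le_one_iff.2 (by nlinarith)
  rw [Real.norm_of_nonneg (by linarith)]
  have h2 := Real.add_one_le_exp (-(η * X a))
  have h3 := Real.exp_pos (-(η * X a))
  rcases le_total (X a) 1 with h | h
  · rw [min_eq_left h]
    nlinarith [le_max_left η 1]
  · rw [min_eq_right h]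
    nlinarith [le_max_right η 1]

lemma aux_fin {α : Type*} [MeasurableSpace α] (μ : Measure α) (X : α → ℝ) (η : ℝ) (hη : 0 < η)
    (hi : Integrable (fun a => 1 - Real.exp (-(η * X a))) μ) (t : ℝ) (ht : 0 < t) :
    μ {a | t < X a} < ⊤ := by
  have hpos : 0 < 1 - Real.exp (-(η * t)) := by
    have : Real.exp (-(η * t)) < 1 := by
      rw [← Real.exp_zero]
      exact Real.exp_lt_exp.2 (by nlinarith)
    linarith
  refine (measure_mono ?_).trans_lt (hi.measure_gt_lt_top hpos)
  intro a ha
  have ha : t < X a := ha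
  have : Real.exp (-(η * X a)) < Real.exp (-(η * t)) := Real.exp_lt_exp.2 (by nlinarith)
  rw [Set.mem_setOf_eq]
  linarith

/-- Double Laplace transform of the tail of the Lévy measure:
`∫₀^∞∫₀^∞ e^{−η₁t₁−η₂t₂} φ̄(t₁,t₂) dt₁dt₂ = (T₁(η₁)+T₂(η₂)−S(η₁,η₂))/(η₁η₂)`. -/
theorem laplace_transform_tail_levy_measure
    (φ : Measure (ℝ × ℝ)) [SigmaFinite φ]
    (hsupp : φ {p : ℝ × ℝ | ¬ (0 ≤ p.1 ∧ 0 ≤ p.2)} = 0)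
    (hint1 : ∫⁻ p, ENNReal.ofReal (min p.1 1) ∂φ < ⊤)
    (hint2 : ∫⁻ p, ENNReal.ofReal (min p.2 1) ∂φ < ⊤)
    (S : ℝ → ℝ → ℝ) (T1 T2 : ℝ → ℝ)
    (hS : ∀ η1 η2 : ℝ, 0 ≤ η1 → 0 ≤ η2 →
      S η1 η2 = ∫ p, (1 - Real.exp (-(η1 * p.1) - η2 * p.2)) ∂φ)
    (hT1 : ∀ η : ℝ, 0 ≤ η → T1 η = ∫ p, (1 - Real.exp (-(η * p.1))) ∂φ)
    (hT2 : ∀ η : ℝ, 0 ≤ η → T2 η = ∫ p, (1 - Real.exp (-(η * p.2))) ∂φ)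
    (η1 η2 : ℝ) (hη1 : 0 < η1) (hη2 : 0 < η2) :
    ∫ t1 in Set.Ioi (0 : ℝ), ∫ t2 in Set.Ioi (0 : ℝ),
        Real.exp (-(η1 * t1) - η2 * t2) * (φ (Set.Ioi t1 ×ˢ Set.Ioi t2)).toReal
      = (T1 η1 + T2 η2 - S η1 η2) / (η1 * η2) := by
  have hae : ∀ᵐ p ∂φ, 0 ≤ p.1 ∧ 0 ≤ p.2 := hsupp
  have h01 : 0 ≤ᵐ[φ] (fun p : ℝ × ℝ => p.1) := hae.mono fun p hp => hp.1
  have h02 : 0 ≤ᵐ[φ] (fun p : ℝ × ℝ => p.2) := hae.mono fun p hp => hp.2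
  have hA := aux_integrable φ (fun p => p.1) measurable_fst h01 η1 hη1 hint1
  have hB := aux_integrable φ (fun p => p.2) measurable_snd h02 η2 hη2 hint2
  have hf1 := aux_fin φ (fun p => p.1) η1 hη1 hA
  have hf2 := aux_fin φ (fun p => p.2) η2 hη2 hB
  have hnn : ∀ η x : ℝ, 0 < η → 0 ≤ x → 0 ≤ 1 - Real.exp (-(η * x)) := by
    intro η x h1 h2
    have : Real.exp (-(η * x)) ≤ 1 := Real.exp_le_one_iff.2 (by nlinarith)
    linarith
  set H : ℝ × ℝ → ENNReal := fun p => ENNReal.ofReal ((1 - Real.exp (-(η2 * p.2))) / η2) with hH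
  have hHm : Measurable H := by fun_prop
  set ν := φ.withDensity H with hν
  have hac : ν ≪ φ := withDensity_absolutelyContinuous φ H
  have hset : ∀ t : ℝ, MeasurableSet {p : ℝ × ℝ | t < p.1} := fun t =>
    measurableSet_lt measurable_const measurable_fst
  have hset2 : ∀ t : ℝ, MeasurableSet {p : ℝ × ℝ | t < p.2} := fun t =>
    measurableSet_lt measurable_const measurable_snd
  have hfν : ∀ t, 0 < t → ν {p | t < p.1} < ⊤ := by
    intro t _
    rw [hν, withDensity_apply _ (hset t)]
    refine (setLIntegral_le_lintegral _ _).trans_lt ?_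
    exact (hB.div_const η2).lintegral_lt_top
  have inner : ∀ t1 ∈ Set.Ioi (0:ℝ), (∫ t2 in Set.Ioi (0 : ℝ),
        Real.exp (-(η1 * t1) - η2 * t2) * (φ (Set.Ioi t1 ×ˢ Set.Ioi t2)).toReal)
        = Real.exp (-(η1 * t1)) * (ν {p | t1 < p.1}).toReal := by
    intro t1 ht1
    have := aux_layer_real (φ.restrict {p | t1 < p.1}) (fun p => p.2) measurable_snd
      (ae_restrict_of_ae h02) η2 hη2
      (fun t ht => (Measure.restrict_apply_le _ _).trans_lt (hf2 t ht))
    rw [hν, withDensity_apply _ (hset t1), ← this, ← integral_const_mul]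
    congr 1
    ext t2
    rw [Measure.restrict_apply (hset2 t2), sub_eq_add_neg, Real.exp_add, mul_assoc]
    congr 4
    ext p
    simp [and_comm]
  rw [setIntegral_congr_fun measurableSet_Ioi inner,
    aux_layer_real ν (fun p => p.1) measurable_fst (hac.ae_le h01) η1 hη1 hfν, hν,
    lintegral_withDensity_eq_lintegral_mul _ hHm (by fun_prop)]
  have hAB : Integrable (fun p : ℝ × ℝ => (1 - Real.exp (-(η1 * p.1))) *
      (1 - Real.exp (-(η2 * p.2)))) φ := by
    refine hA.mono' (by fun_prop) ?_
    filter_upwards [hae] with p hp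
    have h1 := hnn η1 p.1 hη1 hp.1
    have h2 := hnn η2 p.2 hη2 hp.2
    rw [Real.norm_of_nonneg (mul_nonneg h1 h2)]
    have := Real.exp_pos (-(η2 * p.2))
    nlinarith
  have e1 : ∫⁻ a, (H * fun p : ℝ × ℝ => ENNReal.ofReal ((1 - Real.exp (-(η1 * p.1))) / η1)) a ∂φ
      = ∫⁻ p, ENNReal.ofReal ((1 - Real.exp (-(η1 * p.1))) *
      (1 - Real.exp (-(η2 * p.2))) / (η1 * η2)) ∂φ := by
    refine lintegral_congr_ae ?_
    filter_upwards [hae] with p hp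
    have h2 := hnn η2 p.2 hη2 hp.2
    rw [Pi.mul_apply, hH, ← ENNReal.ofReal_mul (by positivity)]
    congr 1
    field_simp
  rw [e1, ← integral_eq_lintegral_of_nonneg_ae, integral_div, hS _ _ hη1.le hη2.le, hT1 _ hη1.le,
    hT2 _ hη2.le]
  · congr 1
    have e2 : ∀ p : ℝ × ℝ, 1 - Real.exp (-(η1 * p.1) - η2 * p.2) =
        (1 - Real.exp (-(η1 * p.1))) + (1 - Real.exp (-(η2 * p.2))) -
        (1 - Real.exp (-(η1 * p.1))) * (1 - Real.exp (-(η2 * p.2))) := by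
      intro p
      rw [sub_eq_add_neg (-(η1 * p.1)), Real.exp_add]
      ring
    simp only [e2]
    have e3 := integral_sub (hA.add hB) hAB
    simp only [Pi.add_apply] at e3
    rw [e3, integral_add hA hB]
    ring
  · filter_upwards [hae] with p hp
    have h1 := hnn η1 p.1 hη1 hp.1
    have h2 := hnn η2 p.2 hη2 hp.2
    show 0 ≤ _
    positivity
  · exact (hAB.div_const _).aestronglyMeasurable
end

section
/- For all t₁, t₂ ≥ 0, all η₁, η₂ ≥ 0, and all 0 ≤ x₁ ≤ x₂: P(L₁(t₁) ≥ x₁, L₂(t₂) ≥ x₂) ≤ exp(−x₁ S(η₁,η₂)) · exp(−(x₂−x₁) T₂(η₂)) · exp(η₁ t₁ + η₂ t₂); symmetrically, for 0 ≤ x₂ < x₁: P(L₁(t₁) ≥ x₁, L₂(t₂) ≥ x₂) ≤ exp(−x₂ S(η₁,η₂)) · exp(−(x₁−x₂) T₁(η₁)) · exp(η₁ t₁ + η₂ t₂). -/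
open MeasureTheory ProbabilityTheory


theorem aux_bound
    {Ω : Type*} [MeasurableSpace Ω] (P : Measure Ω) [IsProbabilityMeasure P]
    (H1 H2 : ℝ → Ω → ℝ) (S : ℝ → ℝ → ℝ)
    (m1 : ∀ x, Measurable (H1 x)) (m2 : ∀ x, Measurable (H2 x))
    (hH1nonneg : ∀ x ω, 0 ≤ H1 x ω) (hH2nonneg : ∀ x ω, 0 ≤ H2 x ω)
    (hzero : ∀ᵐ ω ∂P, H1 0 ω = 0 ∧ H2 0 ω = 0)
    (hindep : ∀ s t : ℝ, 0 ≤ s → s ≤ t →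
      IndepFun (fun ω => (H1 t ω - H1 s ω, H2 t ω - H2 s ω))
        (fun ω => (H1 s ω, H2 s ω)) P)
    (hincr : ∀ s t α β : ℝ, 0 ≤ s → s ≤ t → 0 ≤ α → 0 ≤ β →
      ∫ ω, Real.exp (-(α * (H1 t ω - H1 s ω)) - β * (H2 t ω - H2 s ω)) ∂P
        = Real.exp (-(t - s) * S α β))
    (t1 t2 η1 η2 : ℝ) (hη1 : 0 ≤ η1) (hη2 : 0 ≤ η2)
    (y1 y2 : ℝ) (hy1 : 0 ≤ y1) (hy : y1 ≤ y2) (E : Set Ω)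
    (hE : ∀ᵐ ω ∂P, ω ∈ E → H1 y1 ω ≤ t1 ∧ H2 y2 ω ≤ t2) :
    (P E).toReal ≤
        Real.exp (-y1 * S η1 η2) * Real.exp (-(y2 - y1) * S 0 η2) *
          Real.exp (η1 * t1 + η2 * t2) := by
  set f : Ω → ℝ := fun ω => Real.exp (-(η1 * H1 y1 ω) - η2 * H2 y2 ω) with hf
  have hfm : Measurable f := by
    have := m1 y1
    have := m2 y2
    fun_prop
  have hfi : Integrable f P := by
    refine Integrable.of_bound hfm.aestronglyMeasurable 1 (Filter.Eventually.of_forall fun ω => ?_)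
    rw [Real.norm_eq_abs, abs_of_pos (Real.exp_pos _)]
    apply Real.exp_le_one_iff.2
    have := mul_nonneg hη1 (hH1nonneg y1 ω)
    have := mul_nonneg hη2 (hH2nonneg y2 ω)
    linarith
  have hint : ∫ ω, f ω ∂P = Real.exp (-y1 * S η1 η2) * Real.exp (-(y2 - y1) * S 0 η2) := by
    have a1 := hincr 0 y1 η1 η2 le_rfl hy1 hη1 hη2
    have a2 := hincr y1 y2 0 η2 hy1 hy le_rfl hη2
    rw [sub_zero] at a1
    rw [← a1, ← a2, mul_comm]
    have a3 : ∫ ω, Real.exp (-(η1 * (H1 y1 ω - H1 0 ω)) - η2 * (H2 y1 ω - H2 0 ω)) ∂P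
        = ∫ ω, Real.exp (-(η1 * H1 y1 ω) - η2 * H2 y1 ω) ∂P := by
      apply integral_congr_ae
      filter_upwards [hzero] with ω hω
      simp [hω.1, hω.2]
    rw [a3]
    have ind := (hindep y1 y2 hy1 hy).comp
      (φ := fun p : ℝ × ℝ => Real.exp (-(0 * p.1) - η2 * p.2))
      (ψ := fun p : ℝ × ℝ => Real.exp (-(η1 * p.1) - η2 * p.2)) (by fun_prop) (by fun_prop)
    have n1 := m1 y1
    have n2 := m2 y2
    have n3 := m1 y2
    have n4 := m2 y1
    have := ind.integral_mul_eq_mul_integral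
      (Measurable.aestronglyMeasurable (by fun_prop))
      (Measurable.aestronglyMeasurable (by fun_prop))
    refine Eq.trans ?_ this
    apply integral_congr_ae
    refine Filter.Eventually.of_forall fun ω => ?_
    simp only [hf, Pi.mul_apply, Function.comp, ← Real.exp_add]
    congr 1
    ring
  have mk := mul_meas_ge_le_integral_of_nonneg
    (Filter.Eventually.of_forall fun ω => (Real.exp_pos _).le) hfi (Real.exp (-(η1 * t1 + η2 * t2)))
  have hle : (P E).toReal ≤ P.real {ω | Real.exp (-(η1 * t1 + η2 * t2)) ≤ f ω} := by
    apply ENNReal.toReal_mono (measure_ne_top _ _)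
    apply measure_mono_ae
    filter_upwards [hE] with ω h hω
    obtain ⟨h1, h2⟩ := h hω
    apply Real.exp_le_exp.2
    have := mul_le_mul_of_nonneg_left h1 hη1
    have := mul_le_mul_of_nonneg_left h2 hη2
    linarith
  replace hle := (mul_le_mul_of_nonneg_left hle (Real.exp_pos (-(η1 * t1 + η2 * t2))).le).trans mk
  rw [hint, Real.exp_neg, inv_mul_le_iff₀ (Real.exp_pos _)] at hle
  linarith

theorem aux_limit
    {Ω : Type*} [MeasurableSpace Ω] (P : Measure Ω) [IsProbabilityMeasure P]
    (H1 H2 : ℝ → Ω → ℝ) (S : ℝ → ℝ → ℝ)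
    (m1 : ∀ x, Measurable (H1 x)) (m2 : ∀ x, Measurable (H2 x))
    (hH1nonneg : ∀ x ω, 0 ≤ H1 x ω) (hH2nonneg : ∀ x ω, 0 ≤ H2 x ω)
    (hzero : ∀ᵐ ω ∂P, H1 0 ω = 0 ∧ H2 0 ω = 0)
    (hindep : ∀ s t : ℝ, 0 ≤ s → s ≤ t →
      IndepFun (fun ω => (H1 t ω - H1 s ω, H2 t ω - H2 s ω))
        (fun ω => (H1 s ω, H2 s ω)) P)
    (hincr : ∀ s t α β : ℝ, 0 ≤ s → s ≤ t → 0 ≤ α → 0 ≤ β →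
      ∫ ω, Real.exp (-(α * (H1 t ω - H1 s ω)) - β * (H2 t ω - H2 s ω)) ∂P
        = Real.exp (-(t - s) * S α β))
    (t1 t2 η1 η2 : ℝ) (ht1 : 0 ≤ t1) (ht2 : 0 ≤ t2) (hη1 : 0 ≤ η1) (hη2 : 0 ≤ η2)
    (x1 x2 : ℝ) (hx1 : 0 ≤ x1) (hx : x1 ≤ x2) (E : Set Ω)
    (hE : ∀ ω ∈ E, x1 ≤ sInf {x : ℝ | 0 ≤ x ∧ H1 x ω > t1} ∧
      x2 ≤ sInf {x : ℝ | 0 ≤ x ∧ H2 x ω > t2}) :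
    (P E).toReal ≤
        Real.exp (-x1 * S η1 η2) * Real.exp (-(x2 - x1) * S 0 η2) *
          Real.exp (η1 * t1 + η2 * t2) := by
  have key : ∀ (h : ℝ → ℝ) (t x c : ℝ), 0 ≤ t → h 0 = 0 → 0 ≤ x → 0 ≤ c → c < 1 →
      x ≤ sInf {x : ℝ | 0 ≤ x ∧ h x > t} → h (c * x) ≤ t := by
    intro h t x c ht h0 hx hc hc1 hs
    rcases hx.eq_or_lt with rfl | hx
    · simpa [h0] using ht
    · by_contra hcon
      have : sInf {x : ℝ | 0 ≤ x ∧ h x > t} ≤ c * x :=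
        csInf_le ⟨0, fun y hy => hy.1⟩ ⟨by positivity, not_le.1 hcon⟩
      nlinarith
  have lim : Filter.Tendsto (fun c : ℝ => Real.exp (-(c * x1) * S η1 η2) *
      Real.exp (-(c * x2 - c * x1) * S 0 η2) * Real.exp (η1 * t1 + η2 * t2))
      (nhdsWithin 1 (Set.Iio 1)) (nhds (Real.exp (-(1 * x1) * S η1 η2) *
      Real.exp (-(1 * x2 - 1 * x1) * S 0 η2) * Real.exp (η1 * t1 + η2 * t2))) := by
    apply tendsto_nhdsWithin_of_tendsto_nhds
    apply Continuous.tendsto (f := fun c : ℝ => Real.exp (-(c * x1) * S η1 η2) *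
      Real.exp (-(c * x2 - c * x1) * S 0 η2) * Real.exp (η1 * t1 + η2 * t2))
    fun_prop
  simp only [one_mul] at lim
  refine ge_of_tendsto lim ?_
  filter_upwards [Ioo_mem_nhdsLT (zero_lt_one (α := ℝ))] with c hc
  refine aux_bound P H1 H2 S m1 m2 hH1nonneg hH2nonneg hzero hindep hincr t1 t2 η1 η2 hη1 hη2
    (c * x1) (c * x2) (mul_nonneg hc.1.le hx1) (mul_le_mul_of_nonneg_left hx hc.1.le) E ?_
  filter_upwards [hzero] with ω h0 hω
  exact ⟨key (fun x => H1 x ω) t1 x1 c ht1 h0.1 hx1 hc.1.le hc.2 (hE ω hω).1,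
    key (fun x => H2 x ω) t2 x2 c ht2 h0.2 (hx1.trans hx) hc.1.le hc.2 (hE ω hω).2⟩

/-- Exponential bound for the joint survival function of the
inverse of a bivariate subordinator, with `T₁(α) = S(α,0)`, `T₂(β) = S(0,β)`. -/
theorem inverse_bivariate_subordinator_survival_bound
    {Ω : Type*} [MeasurableSpace Ω] (P : Measure Ω) [IsProbabilityMeasure P]
    (H1 H2 : ℝ → Ω → ℝ) (S : ℝ → ℝ → ℝ)
    (hH1meas : Measurable (Function.uncurry H1))
    (hH2meas : Measurable (Function.uncurry H2))
    (hH1nonneg : ∀ x ω, 0 ≤ H1 x ω) (hH2nonneg : ∀ x ω, 0 ≤ H2 x ω)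
    (hzero : ∀ᵐ ω ∂P, H1 0 ω = 0 ∧ H2 0 ω = 0)
    (hSnonneg : ∀ α β : ℝ, 0 ≤ α → 0 ≤ β → 0 ≤ S α β)
    (hindep : ∀ s t : ℝ, 0 ≤ s → s ≤ t →
      IndepFun (fun ω => (H1 t ω - H1 s ω, H2 t ω - H2 s ω))
        (fun ω => (H1 s ω, H2 s ω)) P)
    (hincr : ∀ s t α β : ℝ, 0 ≤ s → s ≤ t → 0 ≤ α → 0 ≤ β →
      ∫ ω, Real.exp (-(α * (H1 t ω - H1 s ω)) - β * (H2 t ω - H2 s ω)) ∂P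
        = Real.exp (-(t - s) * S α β))
    (hpath : ∀ᵐ ω ∂P,
      (∀ x y : ℝ, 0 ≤ x → x ≤ y → H1 x ω ≤ H1 y ω) ∧
      (∀ M : ℝ, ∃ x : ℝ, 0 ≤ x ∧ H1 x ω > M) ∧
      (∀ x y : ℝ, 0 ≤ x → x ≤ y → H2 x ω ≤ H2 y ω) ∧
      (∀ M : ℝ, ∃ x : ℝ, 0 ≤ x ∧ H2 x ω > M))
    (L1 L2 : ℝ → Ω → ℝ)
    (hL1 : ∀ t ω, L1 t ω = sInf {x : ℝ | 0 ≤ x ∧ H1 x ω > t})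
    (hL2 : ∀ t ω, L2 t ω = sInf {x : ℝ | 0 ≤ x ∧ H2 x ω > t})
    (t1 t2 η1 η2 : ℝ) (ht1 : 0 ≤ t1) (ht2 : 0 ≤ t2) (hη1 : 0 ≤ η1) (hη2 : 0 ≤ η2)
    (x1 x2 : ℝ) :
    (0 ≤ x1 → x1 ≤ x2 →
      (P {ω | L1 t1 ω ≥ x1 ∧ L2 t2 ω ≥ x2}).toReal ≤
        Real.exp (-x1 * S η1 η2) * Real.exp (-(x2 - x1) * S 0 η2) *
          Real.exp (η1 * t1 + η2 * t2)) ∧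
    (0 ≤ x2 → x2 < x1 →
      (P {ω | L1 t1 ω ≥ x1 ∧ L2 t2 ω ≥ x2}).toReal ≤
        Real.exp (-x2 * S η1 η2) * Real.exp (-(x1 - x2) * S η1 0) *
          Real.exp (η1 * t1 + η2 * t2)) := by
  have m1 : ∀ x, Measurable (H1 x) := fun x => hH1meas.comp measurable_prodMk_left
  have m2 : ∀ x, Measurable (H2 x) := fun x => hH2meas.comp measurable_prodMk_left
  constructor
  · intro h1 h2
    refine aux_limit P H1 H2 S m1 m2 hH1nonneg hH2nonneg hzero hindep hincr t1 t2 η1 η2 ht1 ht2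
      hη1 hη2 x1 x2 h1 h2 _ ?_
    rintro ω ⟨ha, hb⟩
    exact ⟨hL1 t1 ω ▸ ha, hL2 t2 ω ▸ hb⟩
  · intro h1 h2
    rw [add_comm (η1 * t1)]
    refine aux_limit P H2 H1 (fun a b => S b a) m2 m1 hH2nonneg hH1nonneg
      (hzero.mono fun ω h => h.symm) ?_ ?_ t2 t1 η2 η1 ht2 ht1
      hη2 hη1 x2 x1 h1 h2.le _ ?_
    · intro s t hs hst
      exact (hindep s t hs hst).comp measurable_swap measurable_swap
    · intro s t α β hs hst hα hβ
      rw [← hincr s t β α hs hst hβ hα]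
      congr 1
      ext ω
      congr 1
      ring
    · rintro ω ⟨ha, hb⟩
      exact ⟨hL2 t2 ω ▸ hb, hL1 t1 ω ▸ ha⟩
end

section
/- Suppose there exist η₁, η₂ ≥ 0 with S(η₁,η₂) > 0, T₁(η₁) > 0 and T₂(η₂) > 0. Then for all t₁, t₂ ≥ 0 and all natural numbers m, n, the mixed moment E[L₁(t₁)^m · L₂(t₂)^n] is finite. -/
open MeasureTheory ProbabilityTheory

lemma single_bound {Ω : Type*} [MeasurableSpace Ω] (P : Measure Ω)
    (H : ℝ → Ω → ℝ) (hm : ∀ x, Measurable (H x)) (a s t : ℝ) (ha : 0 ≤ a) (hs : 0 < s)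
    (ht : 0 ≤ t)
    (hz : ∀ᵐ ω ∂P, H 0 ω = 0)
    (hp : ∀ᵐ ω ∂P, (∀ x y : ℝ, 0 ≤ x → x ≤ y → H x ω ≤ H y ω) ∧
      (∀ M : ℝ, ∃ x : ℝ, 0 ≤ x ∧ H x ω > M))
    (hE : ∀ j : ℕ, ∫⁻ ω, ENNReal.ofReal (Real.exp (-(a * H j ω))) ∂P
      = ENNReal.ofReal (Real.exp (-(j : ℝ) * s)))
    (L : Ω → ℝ) (hL : ∀ ω, L ω = sInf {x : ℝ | 0 ≤ x ∧ H x ω > t}) (k : ℕ) :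
    ∃ F : Ω → ENNReal, Measurable F ∧ (∀ᵐ ω ∂P, ENNReal.ofReal (L ω ^ k) ≤ F ω) ∧
      ∫⁻ ω, F ω ∂P < ⊤ := by
  refine ⟨fun ω => ∑' j : ℕ, ENNReal.ofReal (((j : ℝ) + 1) ^ k * Real.exp (a * t)) *
      ENNReal.ofReal (Real.exp (-(a * H j ω))), ?_, ?_, ?_⟩
  · refine Measurable.ennreal_tsum fun j => ?_
    have := hm j
    fun_prop
  · filter_upwards [hz, hp] with ω h0 ⟨hmono, hunb⟩
    have hex : ∃ j : ℕ, H j ω > t := by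
      obtain ⟨x, hx0, hx⟩ := hunb t
      obtain ⟨j, hj⟩ := exists_nat_ge x
      exact ⟨j, lt_of_lt_of_le hx (hmono _ _ hx0 hj)⟩
    classical
    obtain ⟨j, hj⟩ : ∃ j : ℕ, Nat.find hex = j + 1 := by
      refine Nat.exists_eq_succ_of_ne_zero fun h => ?_
      have := Nat.find_spec hex
      rw [h] at this
      simp only [Nat.cast_zero, h0] at this
      linarith
    have h1 : H ((j : ℝ) + 1) ω > t := by
      have := Nat.find_spec hex
      rw [hj] at this
      exact_mod_cast this
    have h2 : H j ω ≤ t := by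
      have := Nat.find_min hex (m := j) (by omega)
      exact not_lt.mp this
    have hL0 : 0 ≤ L ω := by
      rw [hL]; exact Real.sInf_nonneg fun x hx => hx.1
    have hL1 : L ω ≤ (j : ℝ) + 1 := by
      rw [hL]; exact csInf_le ⟨0, fun x hx => hx.1⟩ ⟨by positivity, h1⟩
    refine le_trans ?_ (ENNReal.le_tsum j)
    rw [← ENNReal.ofReal_mul (by positivity)]
    refine ENNReal.ofReal_le_ofReal ?_
    rw [mul_assoc, ← Real.exp_add]
    have h3 : (1 : ℝ) ≤ Real.exp (a * t + -(a * H j ω)) := by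
      refine Real.one_le_exp ?_
      nlinarith [mul_le_mul_of_nonneg_left h2 ha]
    calc L ω ^ k ≤ ((j : ℝ) + 1) ^ k := pow_le_pow_left₀ hL0 hL1 k
      _ ≤ _ := le_mul_of_one_le_right (by positivity) h3
  · rw [lintegral_tsum]
    swap
    · intro j
      have := hm j
      fun_prop
    have : ∀ j : ℕ, ∫⁻ ω, ENNReal.ofReal (((j : ℝ) + 1) ^ k * Real.exp (a * t)) *
      ENNReal.ofReal (Real.exp (-(a * H j ω))) ∂P =
        ENNReal.ofReal ((((j : ℝ) + 1) ^ k * Real.exp (a * t)) * Real.exp (-(j : ℝ) * s)) := by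
      intro j
      have := hm j
      rw [lintegral_const_mul _ (by fun_prop), hE, ← ENNReal.ofReal_mul (by positivity)]
    simp_rw [this]
    refine Summable.tsum_ofReal_lt_top ?_
    have h := summable_pow_mul_geometric_of_norm_lt_one (R := ℝ) k (r := Real.exp (-s))
      (by rw [Real.norm_eq_abs, abs_of_pos (Real.exp_pos _)]; exact Real.exp_lt_one_iff.2 (by linarith))
    have h' := ((summable_nat_add_iff 1).2 h).mul_left (Real.exp (a * t) * Real.exp s)
    refine h'.congr fun j => ?_
    have e : Real.exp s * Real.exp (-s) = 1 := by rw [← Real.exp_add]; simp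
    have e2 : Real.exp (-(j : ℝ) * s) = Real.exp (-s) ^ j := by
      rw [← Real.exp_nat_mul]; ring_nf
    rw [e2, pow_succ]
    push_cast
    linear_combination (Real.exp (a * t) * ((j : ℝ) + 1) ^ k * Real.exp (-s) ^ j) * e

/-- If there are `η₁, η₂ ≥ 0` with `S(η₁,η₂) > 0`,
`T₁(η₁) = S(η₁,0) > 0` and `T₂(η₂) = S(0,η₂) > 0`, then all mixed moments
`E[L₁(t₁)^m L₂(t₂)^n]` are finite. -/
theorem inverse_bivariate_subordinator_moments_finite
    {Ω : Type*} [MeasurableSpace Ω] (P : Measure Ω) [IsProbabilityMeasure P]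
    (H1 H2 : ℝ → Ω → ℝ) (S : ℝ → ℝ → ℝ)
    (hH1meas : Measurable (Function.uncurry H1))
    (hH2meas : Measurable (Function.uncurry H2))
    (hH1nonneg : ∀ x ω, 0 ≤ H1 x ω) (hH2nonneg : ∀ x ω, 0 ≤ H2 x ω)
    (hzero : ∀ᵐ ω ∂P, H1 0 ω = 0 ∧ H2 0 ω = 0)
    (hSnonneg : ∀ α β : ℝ, 0 ≤ α → 0 ≤ β → 0 ≤ S α β)
    (hindep : ∀ s t : ℝ, 0 ≤ s → s ≤ t →
      IndepFun (fun ω => (H1 t ω - H1 s ω, H2 t ω - H2 s ω))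
        (fun ω => (H1 s ω, H2 s ω)) P)
    (hincr : ∀ s t α β : ℝ, 0 ≤ s → s ≤ t → 0 ≤ α → 0 ≤ β →
      ∫ ω, Real.exp (-(α * (H1 t ω - H1 s ω)) - β * (H2 t ω - H2 s ω)) ∂P
        = Real.exp (-(t - s) * S α β))
    (hpath : ∀ᵐ ω ∂P,
      (∀ x y : ℝ, 0 ≤ x → x ≤ y → H1 x ω ≤ H1 y ω) ∧
      (∀ M : ℝ, ∃ x : ℝ, 0 ≤ x ∧ H1 x ω > M) ∧
      (∀ x y : ℝ, 0 ≤ x → x ≤ y → H2 x ω ≤ H2 y ω) ∧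
      (∀ M : ℝ, ∃ x : ℝ, 0 ≤ x ∧ H2 x ω > M))
    (L1 L2 : ℝ → Ω → ℝ)
    (hL1 : ∀ t ω, L1 t ω = sInf {x : ℝ | 0 ≤ x ∧ H1 x ω > t})
    (hL2 : ∀ t ω, L2 t ω = sInf {x : ℝ | 0 ≤ x ∧ H2 x ω > t})
    (hpos : ∃ η1 η2 : ℝ, 0 ≤ η1 ∧ 0 ≤ η2 ∧
      0 < S η1 η2 ∧ 0 < S η1 0 ∧ 0 < S 0 η2)
    (t1 t2 : ℝ) (ht1 : 0 ≤ t1) (ht2 : 0 ≤ t2) (m n : ℕ) :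
    ∫⁻ ω, ENNReal.ofReal (L1 t1 ω ^ m * L2 t2 ω ^ n) ∂P < ⊤ := by
  obtain ⟨η1, η2, hη1, hη2, -, hS1, hS2⟩ := hpos
  have m1 : ∀ x, Measurable (H1 x) := fun x => hH1meas.comp measurable_prodMk_left
  have m2 : ∀ x, Measurable (H2 x) := fun x => hH2meas.comp measurable_prodMk_left
  have key : ∀ (H : ℝ → Ω → ℝ) (a s : ℝ) (j : ℕ), (∀ x, Measurable (H x)) →
      (∀ x ω, 0 ≤ H x ω) → 0 ≤ a →
      ∫ ω, Real.exp (-(a * H j ω)) ∂P = Real.exp (-(j : ℝ) * s) →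
      ∫⁻ ω, ENNReal.ofReal (Real.exp (-(a * H j ω))) ∂P
        = ENNReal.ofReal (Real.exp (-(j : ℝ) * s)) := by
    intro H a s j hm hn ha h
    rw [← h, ofReal_integral_eq_lintegral_ofReal]
    · refine Integrable.of_bound (C := 1) ?_ ?_
      · have := hm j
        exact Measurable.aestronglyMeasurable (by fun_prop)
      · refine Filter.Eventually.of_forall fun ω => ?_
        rw [Real.norm_eq_abs, abs_of_pos (Real.exp_pos _)]
        have := mul_nonneg ha (hn j ω)
        exact Real.exp_le_one_iff.2 (by linarith)
    · exact Filter.Eventually.of_forall fun ω => (Real.exp_pos _).le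
  obtain ⟨F, hF, hFb, hFi⟩ := single_bound P H1 m1 η1 (S η1 0) t1 hη1 hS1 ht1
    (hzero.mono fun ω h => h.1) (hpath.mono fun ω h => ⟨h.1, h.2.1⟩)
    (fun j => key H1 η1 _ j m1 hH1nonneg hη1 (by
      have h := hincr 0 j η1 0 le_rfl (by positivity) hη1 le_rfl
      rw [sub_zero] at h
      rw [← h]
      refine integral_congr_ae (hzero.mono fun ω h => ?_)
      simp [h.1]))
    (L1 t1) (hL1 t1) (2 * m)
  obtain ⟨G, hG, hGb, hGi⟩ := single_bound P H2 m2 η2 (S 0 η2) t2 hη2 hS2 ht2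
    (hzero.mono fun ω h => h.2) (hpath.mono fun ω h => ⟨h.2.2.1, h.2.2.2⟩)
    (fun j => key H2 η2 _ j m2 hH2nonneg hη2 (by
      have h := hincr 0 j 0 η2 le_rfl (by positivity) le_rfl hη2
      rw [sub_zero] at h
      rw [← h]
      refine integral_congr_ae (hzero.mono fun ω h => ?_)
      simp [h.2]))
    (L2 t2) (hL2 t2) (2 * n)
  calc ∫⁻ ω, ENNReal.ofReal (L1 t1 ω ^ m * L2 t2 ω ^ n) ∂P
      ≤ ∫⁻ ω, (F ω + G ω) ∂P := by
        refine lintegral_mono_ae ?_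
        filter_upwards [hFb, hGb] with ω h1 h2
        refine le_trans ?_ (add_le_add h1 h2)
        have e1 : 0 ≤ L1 t1 ω ^ (2 * m) := by rw [mul_comm, pow_mul]; positivity
        have e2 : 0 ≤ L2 t2 ω ^ (2 * n) := by rw [mul_comm, pow_mul]; positivity
        rw [← ENNReal.ofReal_add e1 e2]
        refine ENNReal.ofReal_le_ofReal ?_
        rw [mul_comm 2 m, mul_comm 2 n, pow_mul, pow_mul]
        nlinarith [sq_nonneg (L1 t1 ω ^ m - L2 t2 ω ^ n), sq_nonneg (L1 t1 ω ^ m),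
          sq_nonneg (L2 t2 ω ^ n)]
    _ = ∫⁻ ω, F ω ∂P + ∫⁻ ω, G ω ∂P := lintegral_add_left hF _
    _ < ⊤ := ENNReal.add_lt_top.2 ⟨hFi, hGi⟩
end

section
/- For every η > 0 with T(η) > 0, the Laplace transform of the mean of the inverse process satisfies ∫₀^∞ e^{−ηt} E[L(t)] dt = 1/(η · T(η)). -/
open MeasureTheory

lemma aux_exp (c h : ℝ) (hc : 0 < c) :
    ∫⁻ t in Set.Ioi h, ENNReal.ofReal (Real.exp (-(c * t))) =
      ENNReal.ofReal (Real.exp (-(c * h)) / c) := by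
  have h1 := integral_exp_mul_Ioi (a := -c) (by linarith) h
  have h2 := integrableOn_exp_mul_Ioi (a := -c) (by linarith) h
  simp only [neg_mul] at h1 h2
  rw [← ofReal_integral_eq_lintegral_ofReal h2 (ae_of_all _ fun t => (Real.exp_pos _).le), h1]
  congr 1
  rw [neg_div_neg_eq]

lemma aux_inner (c h : ℝ) (hc : 0 < c) (hh : 0 ≤ h) :
    ∫⁻ t in Set.Ioi (0:ℝ), (if h ≤ t then ENNReal.ofReal (Real.exp (-(c * t))) else 0) =
      ENNReal.ofReal (Real.exp (-(c * h)) / c) := by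
  rw [← aux_exp c h hc, ← lintegral_indicator measurableSet_Ioi,
    ← lintegral_indicator measurableSet_Ioi]
  apply lintegral_congr_ae
  have : ∀ᵐ t : ℝ, t ≠ h := by simp [ae_iff]
  filter_upwards [this] with t ht
  by_cases h1 : h < t
  · have : 0 < t := by linarith
    simp [h1, h1.le, this]
  · have : ¬ h ≤ t := fun h2 => h1 (lt_of_le_of_ne h2 (Ne.symm ht))
    simp [h1, this]

lemma aux_vol (f : ℝ → ℝ) (t : ℝ) (hm : ∀ x y : ℝ, 0 ≤ x → x ≤ y → f x ≤ f y)
    (hs : ∃ x : ℝ, 0 ≤ x ∧ f x > t) :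
    ∫⁻ x in Set.Ioi (0:ℝ), (if f x ≤ t then (1:ENNReal) else 0) =
      ENNReal.ofReal (sInf {x : ℝ | 0 ≤ x ∧ f x > t}) := by
  set l := sInf {x : ℝ | 0 ≤ x ∧ f x > t} with hl
  have hb : BddBelow {x : ℝ | 0 ≤ x ∧ f x > t} := ⟨0, fun x hx => hx.1⟩
  have : ENNReal.ofReal l = ∫⁻ x in Set.Ioo (0:ℝ) l, 1 := by simp
  rw [this, ← lintegral_indicator measurableSet_Ioi, ← lintegral_indicator measurableSet_Ioo]
  apply lintegral_congr_ae
  have : ∀ᵐ t : ℝ, t ≠ l := by simp [ae_iff]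
  filter_upwards [this] with x hx
  by_cases h0 : 0 < x
  · rcases lt_or_gt_of_ne hx with h1 | h1
    · have : f x ≤ t := by
        by_contra h2
        exact absurd (csInf_le hb ⟨h0.le, not_le.mp h2⟩) (not_le.mpr h1)
      simp [h0, h1, this]
    · obtain ⟨y, hy, hyx⟩ := exists_lt_of_csInf_lt hs h1
      have : t < f x := lt_of_lt_of_le hy.2 (hm y x hy.1 hyx.le)
      simp [h0, h1.le, this]
  · simp [h0]

/-- Laplace transform of the mean of an inverse subordinator:
`∫₀^∞ e^{−ηt} E[L(t)] dt = 1/(η T(η))`. -/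
theorem laplace_transform_mean_inverse_subordinator
    {Ω : Type*} [MeasurableSpace Ω] (P : Measure Ω) [IsProbabilityMeasure P]
    (H : ℝ → Ω → ℝ) (T : ℝ → ℝ)
    (hHmeas : Measurable (Function.uncurry H))
    (hHnonneg : ∀ x ω, 0 ≤ H x ω)
    (hzero : ∀ᵐ ω ∂P, H 0 ω = 0)
    (hTnonneg : ∀ η : ℝ, 0 ≤ η → 0 ≤ T η)
    (hlaplace : ∀ x η : ℝ, 0 ≤ x → 0 ≤ η →
      ∫ ω, Real.exp (-(η * H x ω)) ∂P = Real.exp (-x * T η))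
    (hpath : ∀ᵐ ω ∂P,
      (∀ x y : ℝ, 0 ≤ x → x ≤ y → H x ω ≤ H y ω) ∧
      (∀ M : ℝ, ∃ x : ℝ, 0 ≤ x ∧ H x ω > M))
    (L : ℝ → Ω → ℝ)
    (hL : ∀ t ω, L t ω = sInf {x : ℝ | 0 ≤ x ∧ H x ω > t})
    (η : ℝ) (hη : 0 < η) (hTη : 0 < T η) :
    ∫ t in Set.Ioi (0 : ℝ), Real.exp (-(η * t)) * (∫ ω, L t ω ∂P)
      = 1 / (η * T η) := by
  set μ := (volume : Measure ℝ).restrict (Set.Ioi 0) with hμ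
  set K : ℝ → Ω → ℝ → ENNReal := fun t ω x =>
    if H x ω ≤ t then ENNReal.ofReal (Real.exp (-(η * t))) else 0 with hK
  have hKm : Measurable (fun p : ℝ × Ω × ℝ => K p.1 p.2.1 p.2.2) := by
    refine Measurable.ite ?_ (by fun_prop) measurable_const
    refine measurableSet_le ?_ measurable_fst
    exact hHmeas.comp (f := fun p : ℝ × Ω × ℝ => (p.2.2, p.2.1)) (by fun_prop)
  set m : ℝ → Ω → ENNReal := fun t ω => ∫⁻ x, (if H x ω ≤ t then (1:ENNReal) else 0) ∂μ with hm
  have hmm : ∀ t, Measurable (m t) := by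
    intro t
    refine Measurable.lintegral_prod_right' (f := fun p : Ω × ℝ => if H p.2 p.1 ≤ t then (1:ENNReal) else 0) ?_
    refine Measurable.ite ?_ measurable_const measurable_const
    refine measurableSet_le ?_ measurable_const
    exact hHmeas.comp (f := fun p : Ω × ℝ => (p.2, p.1)) (by fun_prop)
  have hmL : ∀ t, ∀ᵐ ω ∂P, m t ω = ENNReal.ofReal (L t ω) := by
    intro t
    filter_upwards [hpath] with ω hω
    rw [hL]
    exact aux_vol (fun x => H x ω) t hω.1 (hω.2 t)
  have hLnn : ∀ t ω, 0 ≤ L t ω := by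
    intro t ω
    rw [hL]
    exact Real.sInf_nonneg fun x hx => hx.1
  have hEL : ∀ t, ∫ ω, L t ω ∂P = (∫⁻ ω, m t ω ∂P).toReal := by
    intro t
    rw [integral_eq_lintegral_of_nonneg_ae (ae_of_all _ (hLnn t)), lintegral_congr_ae (hmL t)]
    refine AEMeasurable.aestronglyMeasurable ⟨fun ω => (m t ω).toReal, (hmm t).ennreal_toReal, ?_⟩
    filter_upwards [hmL t] with ω hω
    rw [hω, ENNReal.toReal_ofReal (hLnn t ω)]
  set f : ℝ → ENNReal := fun t => ∫⁻ ω, ∫⁻ x, K t ω x ∂μ ∂P with hf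
  have hKtx : Measurable (fun p : ℝ × Ω => ∫⁻ x, K p.1 p.2 x ∂μ) := by
    refine Measurable.lintegral_prod_right' (f := fun q : (ℝ × Ω) × ℝ => K q.1.1 q.1.2 q.2) ?_
    exact hKm.comp (f := fun q : (ℝ × Ω) × ℝ => (q.1.1, q.1.2, q.2)) (by fun_prop)
  have hfm : Measurable f := Measurable.lintegral_prod_right' hKtx
  have hfe : ∀ t, f t = ENNReal.ofReal (Real.exp (-(η * t))) * ∫⁻ ω, m t ω ∂P := by
    intro t
    rw [← lintegral_const_mul _ (hmm t)]
    refine lintegral_congr fun ω => ?_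
    rw [hm]
    simp only
    rw [← lintegral_const_mul' _ _ ENNReal.ofReal_ne_top]
    refine lintegral_congr fun x => ?_
    simp [hK]
  have hft : ∫⁻ t, f t ∂μ = ENNReal.ofReal (1 / (η * T η)) := by
    calc ∫⁻ t, f t ∂μ = ∫⁻ ω, ∫⁻ t, ∫⁻ x, K t ω x ∂μ ∂μ ∂P :=
          lintegral_lintegral_swap hKtx.aemeasurable
      _ = ∫⁻ ω, ∫⁻ x, ∫⁻ t, K t ω x ∂μ ∂μ ∂P := by
          refine lintegral_congr fun ω => lintegral_lintegral_swap ?_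
          exact (hKm.comp (f := fun p : ℝ × ℝ => (p.1, ω, p.2)) (by fun_prop)).aemeasurable
      _ = ∫⁻ ω, ∫⁻ x, ENNReal.ofReal (Real.exp (-(η * H x ω)) / η) ∂μ ∂P := by
          refine lintegral_congr fun ω => lintegral_congr fun x => ?_
          exact aux_inner η (H x ω) hη (hHnonneg x ω)
      _ = ∫⁻ x, ∫⁻ ω, ENNReal.ofReal (Real.exp (-(η * H x ω)) / η) ∂P ∂μ := by
          refine lintegral_lintegral_swap ?_
          have h1 : Measurable (fun p : Ω × ℝ => H p.2 p.1) :=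
            hHmeas.comp (f := fun p : Ω × ℝ => (p.2, p.1)) (by fun_prop)
          exact Measurable.aemeasurable (by unfold Function.uncurry; fun_prop)
      _ = ∫⁻ x, ENNReal.ofReal η⁻¹ * ENNReal.ofReal (Real.exp (-(T η * x))) ∂μ := by
          refine setLIntegral_congr_fun measurableSet_Ioi fun x hx => ?_
          have h1 : Measurable (H x) :=
            hHmeas.comp (f := fun ω : Ω => (x, ω)) (by fun_prop)
          have hi : Integrable (fun ω => Real.exp (-(η * H x ω))) P := by
            refine Integrable.of_bound (C := 1) (by fun_prop) (ae_of_all _ fun ω => ?_)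
            rw [Real.norm_eq_abs, abs_of_pos (Real.exp_pos _), Real.exp_le_one_iff]
            have := mul_nonneg hη.le (hHnonneg x ω)
            linarith
          show ∫⁻ ω, ENNReal.ofReal (Real.exp (-(η * H x ω)) / η) ∂P = _
          rw [← ofReal_integral_eq_lintegral_ofReal (hi.div_const η)
            (ae_of_all _ fun ω => by positivity), integral_div,
            hlaplace x η (le_of_lt hx) hη.le, ← ENNReal.ofReal_mul (by positivity)]
          congr 1
          rw [div_eq_inv_mul]
          congr 2
          ring
      _ = ENNReal.ofReal (1 / (η * T η)) := by
          rw [lintegral_const_mul' _ _ ENNReal.ofReal_ne_top, aux_exp _ _ hTη,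
            ← ENNReal.ofReal_mul (by positivity)]
          congr 1
          simp
          ring
  have hfin : ∀ᵐ t ∂μ, f t < ⊤ := ae_lt_top hfm (by rw [hft]; exact ENNReal.ofReal_ne_top)
  calc ∫ t, Real.exp (-(η * t)) * (∫ ω, L t ω ∂P) ∂μ = ∫ t, (f t).toReal ∂μ := by
        refine integral_congr_ae (ae_of_all _ fun t => ?_)
        simp only
        rw [hfe, hEL, ENNReal.toReal_mul, ENNReal.toReal_ofReal (Real.exp_pos _).le]
    _ = (∫⁻ t, f t ∂μ).toReal := integral_toReal hfm.aemeasurable hfin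
    _ = 1 / (η * T η) := by rw [hft, ENNReal.toReal_ofReal (by positivity)]
end

section
/- For all η₁, η₂ > 0 such that T₁(η₁) > 0, T₂(η₂) > 0 and S(η₁,η₂) > 0, the double Laplace transform of the covariance satisfies ∫₀^∞ ∫₀^∞ e^{−η₁t₁−η₂t₂} Cov(L₁(t₁), L₂(t₂)) dt₁ dt₂ = (T₁(η₁) + T₂(η₂) − S(η₁,η₂)) / (η₁ η₂ T₁(η₁) T₂(η₂) S(η₁,η₂)), where Cov(L₁(t₁), L₂(t₂)) := E[L₁(t₁) L₂(t₂)] − E[L₁(t₁)]·E[L₂(t₂)]. -/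
open MeasureTheory ProbabilityTheory

noncomputable def covMM {Ω : Type*} (H : ℝ → Ω → ℝ) (t : ℝ) (ω : Ω) : ENNReal :=
  ∫⁻ x in Set.Ioi (0 : ℝ), (if H x ω ≤ t then 1 else 0)

lemma cov_lint_exp {c : ℝ} (hc : 0 < c) (a : ℝ) :
    ∫⁻ x in Set.Ioi a, ENNReal.ofReal (Real.exp (-(c * x)))
      = ENNReal.ofReal (Real.exp (-(c * a)) / c) := by
  have h := integrableOn_exp_mul_Ioi (neg_lt_zero.mpr hc) a
  have h2 := integral_exp_mul_Ioi (neg_lt_zero.mpr hc) a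
  simp only [neg_mul] at h h2
  rw [← ofReal_integral_eq_lintegral_ofReal h
    (Filter.Eventually.of_forall fun x => (Real.exp_pos _).le), h2, neg_div_neg_eq]

lemma cov_MM_meas {Ω : Type*} [MeasurableSpace Ω] {H : ℝ → Ω → ℝ}
    (hH : Measurable (Function.uncurry H)) :
    Measurable (fun p : ℝ × Ω => covMM H p.1 p.2) := by
  unfold covMM
  refine Measurable.lintegral_prod_right' (f := fun q : (ℝ × Ω) × ℝ =>
    if H q.2 q.1.2 ≤ q.1.1 then (1 : ENNReal) else 0) ?_
  refine Measurable.ite ?_ measurable_const measurable_const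
  refine measurableSet_le ?_ (by fun_prop)
  exact hH.comp (f := fun q : (ℝ × Ω) × ℝ => (q.2, q.1.2)) (by fun_prop)

lemma cov_L_eq {Ω : Type*} (H : ℝ → Ω → ℝ) (ω : Ω)
    (hmono : ∀ x y : ℝ, 0 ≤ x → x ≤ y → H x ω ≤ H y ω)
    (hub : ∀ M : ℝ, ∃ x : ℝ, 0 ≤ x ∧ H x ω > M) (t : ℝ) :
    covMM H t ω = ENNReal.ofReal (sInf {x : ℝ | 0 ≤ x ∧ H x ω > t}) := by
  set l := sInf {x : ℝ | 0 ≤ x ∧ H x ω > t} with hl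
  have hne : {x : ℝ | 0 ≤ x ∧ H x ω > t}.Nonempty := hub t
  have hbd : BddBelow {x : ℝ | 0 ≤ x ∧ H x ω > t} := ⟨0, fun x hx => hx.1⟩
  have key : covMM H t ω = ∫⁻ x in Set.Ioi (0 : ℝ), (Set.Iio l).indicator (fun _ => 1) x := by
    unfold covMM
    refine lintegral_congr_ae ?_
    have h1 : ∀ᵐ x : ℝ, x ≠ l := by simp [ae_iff]
    filter_upwards [ae_restrict_mem measurableSet_Ioi, ae_restrict_of_ae h1] with x hx hxl
    have hx0 : 0 < x := hx
    rcases lt_or_gt_of_ne hxl with h | h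
    · have : H x ω ≤ t := by
        by_contra hc
        exact absurd (csInf_le hbd ⟨hx0.le, not_le.mp hc⟩) (not_le.mpr h)
      simp [this, h]
    · obtain ⟨a, ha, hax⟩ := exists_lt_of_csInf_lt hne h
      have : ¬ H x ω ≤ t := not_le.mpr (lt_of_lt_of_le ha.2 (hmono a x ha.1 hax.le))
      simp [this, h.le]
  rw [key, lintegral_indicator measurableSet_Iio, lintegral_one, Measure.restrict_restrict
    measurableSet_Iio, Measure.restrict_apply_univ, Set.inter_comm, Set.Ioi_inter_Iio,
    Real.volume_Ioo, sub_zero]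

lemma cov_N_eq {Ω : Type*} [MeasurableSpace Ω] {H : ℝ → Ω → ℝ}
    (hH : Measurable (Function.uncurry H)) (hn : ∀ x ω, 0 ≤ H x ω) {η : ℝ} (hη : 0 < η) (ω : Ω) :
    ∫⁻ t in Set.Ioi (0 : ℝ), ENNReal.ofReal (Real.exp (-(η * t))) * covMM H t ω
      = ENNReal.ofReal (1 / η) *
        ∫⁻ x in Set.Ioi (0 : ℝ), ENNReal.ofReal (Real.exp (-(η * H x ω))) := by
  have hHω : Measurable (fun x => H x ω) :=
    hH.comp (f := fun x : ℝ => (x, ω)) (by fun_prop)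
  have hm : Measurable (fun q : ℝ × ℝ => if H q.2 ω ≤ q.1 then (1 : ENNReal) else 0) := by
    refine Measurable.ite ?_ measurable_const measurable_const
    exact measurableSet_le (hHω.comp measurable_snd) measurable_fst
  calc _ = ∫⁻ t in Set.Ioi (0 : ℝ), ∫⁻ x in Set.Ioi (0 : ℝ),
        ENNReal.ofReal (Real.exp (-(η * t))) * (if H x ω ≤ t then 1 else 0) := by
        refine lintegral_congr fun t => ?_
        rw [covMM, lintegral_const_mul]
        exact hm.comp (f := fun x : ℝ => (t, x)) (by fun_prop)
    _ = ∫⁻ x in Set.Ioi (0 : ℝ), ∫⁻ t in Set.Ioi (0 : ℝ),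
        ENNReal.ofReal (Real.exp (-(η * t))) * (if H x ω ≤ t then 1 else 0) := by
        refine lintegral_lintegral_swap (Measurable.aemeasurable ?_)
        exact Measurable.mul (by fun_prop) hm
    _ = ∫⁻ x in Set.Ioi (0 : ℝ), ENNReal.ofReal (1 / η) *
          ENNReal.ofReal (Real.exp (-(η * H x ω))) := by
        refine lintegral_congr fun x => ?_
        have h1 : ∀ᵐ t : ℝ, t ≠ H x ω := by simp [ae_iff]
        have : ∫⁻ t in Set.Ioi (0 : ℝ),
            ENNReal.ofReal (Real.exp (-(η * t))) * (if H x ω ≤ t then 1 else 0)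
            = ∫⁻ t in Set.Ioi (0 : ℝ), (Set.Ioi (H x ω)).indicator
              (fun t => ENNReal.ofReal (Real.exp (-(η * t)))) t := by
          refine lintegral_congr_ae ?_
          filter_upwards [ae_restrict_of_ae h1] with t ht
          rcases lt_or_gt_of_ne ht with h | h
          · simp [h.le, not_le.mpr h]
          · simp [h.le, h]
        rw [this, lintegral_indicator measurableSet_Ioi, Measure.restrict_restrict
          measurableSet_Ioi, Set.Ioi_inter_Ioi, max_eq_left (hn x ω), cov_lint_exp hη,
          ← ENNReal.ofReal_mul (by positivity)]
        congr 1; ring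
    _ = _ := by
        rw [lintegral_const_mul]
        fun_prop

lemma cov_single {Ω : Type*} [MeasurableSpace Ω] (P : Measure Ω)
    (H1 H2 : ℝ → Ω → ℝ) (S : ℝ → ℝ → ℝ)
    (hincr : ∀ s t α β : ℝ, 0 ≤ s → s ≤ t → 0 ≤ α → 0 ≤ β →
      ∫ ω, Real.exp (-(α * (H1 t ω - H1 s ω)) - β * (H2 t ω - H2 s ω)) ∂P
        = Real.exp (-(t - s) * S α β))
    {s t α β : ℝ} (hs : 0 ≤ s) (hst : s ≤ t) (hα : 0 ≤ α) (hβ : 0 ≤ β) :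
    ∫⁻ ω, ENNReal.ofReal (Real.exp (-(α * (H1 t ω - H1 s ω)) - β * (H2 t ω - H2 s ω))) ∂P
      = ENNReal.ofReal (Real.exp (-((t - s) * S α β))) := by
  have h := hincr s t α β hs hst hα hβ
  rw [← neg_mul, ← h, ofReal_integral_eq_lintegral_ofReal]
  · by_contra hc
    rw [integral_undef hc] at h
    exact (Real.exp_pos _).ne h
  · exact Filter.Eventually.of_forall fun x => (Real.exp_pos _).le

lemma cov_single0 {Ω : Type*} [MeasurableSpace Ω] (P : Measure Ω)
    (H1 H2 : ℝ → Ω → ℝ) (S : ℝ → ℝ → ℝ)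
    (hzero : ∀ᵐ ω ∂P, H1 0 ω = 0 ∧ H2 0 ω = 0)
    (hincr : ∀ s t α β : ℝ, 0 ≤ s → s ≤ t → 0 ≤ α → 0 ≤ β →
      ∫ ω, Real.exp (-(α * (H1 t ω - H1 s ω)) - β * (H2 t ω - H2 s ω)) ∂P
        = Real.exp (-(t - s) * S α β))
    {t α β : ℝ} (ht : 0 ≤ t) (hα : 0 ≤ α) (hβ : 0 ≤ β) :
    ∫⁻ ω, ENNReal.ofReal (Real.exp (-(α * H1 t ω) - β * H2 t ω)) ∂P
      = ENNReal.ofReal (Real.exp (-(t * S α β))) := by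
  have h := cov_single P H1 H2 S hincr le_rfl ht hα hβ
  rw [sub_zero] at h
  rw [← h]
  refine lintegral_congr_ae ?_
  filter_upwards [hzero] with ω hω
  rw [hω.1, hω.2, sub_zero, sub_zero]

lemma cov_two {Ω : Type*} [MeasurableSpace Ω] (P : Measure Ω)
    (H1 H2 : ℝ → Ω → ℝ) (S : ℝ → ℝ → ℝ)
    (hH1meas : Measurable (Function.uncurry H1))
    (hH2meas : Measurable (Function.uncurry H2))
    (hzero : ∀ᵐ ω ∂P, H1 0 ω = 0 ∧ H2 0 ω = 0)
    (hindep : ∀ s t : ℝ, 0 ≤ s → s ≤ t →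
      IndepFun (fun ω => (H1 t ω - H1 s ω, H2 t ω - H2 s ω))
        (fun ω => (H1 s ω, H2 s ω)) P)
    (hincr : ∀ s t α β : ℝ, 0 ≤ s → s ≤ t → 0 ≤ α → 0 ≤ β →
      ∫ ω, Real.exp (-(α * (H1 t ω - H1 s ω)) - β * (H2 t ω - H2 s ω)) ∂P
        = Real.exp (-(t - s) * S α β))
    {x y α β a b : ℝ} (hx : 0 ≤ x) (hxy : x ≤ y) (hα : 0 ≤ α) (hβ : 0 ≤ β)
    (ha : 0 ≤ a) (hb : 0 ≤ b) :
    ∫⁻ ω, ENNReal.ofReal (Real.exp (-(a * (H1 y ω - H1 x ω)) - b * (H2 y ω - H2 x ω))) *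
        ENNReal.ofReal (Real.exp (-(α * H1 x ω) - β * H2 x ω)) ∂P
      = ENNReal.ofReal (Real.exp (-((y - x) * S a b))) *
        ENNReal.ofReal (Real.exp (-(x * S α β))) := by
  have m1 : ∀ x, Measurable (H1 x) := fun x =>
    hH1meas.comp (f := fun ω : Ω => (x, ω)) (by fun_prop)
  have m2 : ∀ x, Measurable (H2 x) := fun x =>
    hH2meas.comp (f := fun ω : Ω => (x, ω)) (by fun_prop)
  have m1x := m1 x
  have m2x := m2 x
  have m1y := m1 y
  have m2y := m2 y
  rw [← cov_single P H1 H2 S hincr hx hxy ha hb, ← cov_single0 P H1 H2 S hzero hincr hx hα hβ]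
  refine lintegral_mul_eq_lintegral_mul_lintegral_of_indepFun'' (by fun_prop) (by fun_prop) ?_
  exact (hindep x y hx hxy).comp
    (φ := fun p : ℝ × ℝ => ENNReal.ofReal (Real.exp (-(a * p.1) - b * p.2)))
    (ψ := fun p : ℝ × ℝ => ENNReal.ofReal (Real.exp (-(α * p.1) - β * p.2)))
    (by fun_prop) (by fun_prop)

/-- deterministic triangle integral -/
lemma cov_tri {s T : ℝ} (hs : 0 < s) (hT : 0 < T) (p : ℝ → ℝ → Prop)
    (hp : ∀ x y, x < y → p x y) (hp' : ∀ x y, y < x → ¬ p x y) [∀ x y, Decidable (p x y)] :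
    ∫⁻ x in Set.Ioi (0 : ℝ), ∫⁻ y in Set.Ioi (0 : ℝ),
      (if p x y then ENNReal.ofReal (Real.exp (-((y - x) * T))) *
        ENNReal.ofReal (Real.exp (-(x * s))) else 0) = ENNReal.ofReal (1 / (s * T)) := by
  have h : ∀ x ∈ Set.Ioi (0 : ℝ), ∫⁻ y in Set.Ioi (0 : ℝ),
      (if p x y then ENNReal.ofReal (Real.exp (-((y - x) * T))) *
        ENNReal.ofReal (Real.exp (-(x * s))) else 0)
      = ENNReal.ofReal (1 / T) * ENNReal.ofReal (Real.exp (-(s * x))) := by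
    intro x hx
    have hx0 : 0 < x := hx
    have h1 : ∀ᵐ t : ℝ, t ≠ x := by simp [ae_iff]
    have : ∫⁻ y in Set.Ioi (0 : ℝ),
      (if p x y then ENNReal.ofReal (Real.exp (-((y - x) * T))) *
        ENNReal.ofReal (Real.exp (-(x * s))) else 0)
        = ∫⁻ y in Set.Ioi (0 : ℝ), (Set.Ioi x).indicator (fun y =>
          ENNReal.ofReal (Real.exp (x * T - x * s)) * ENNReal.ofReal (Real.exp (-(T * y)))) y := by
      refine lintegral_congr_ae ?_
      filter_upwards [ae_restrict_of_ae h1] with y hy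
      rcases lt_or_gt_of_ne hy with h | h
      · simp [hp' x y h, h.le]
      · simp only [hp x y h, if_true, Set.mem_Ioi, h, Set.indicator_of_mem]
        rw [← ENNReal.ofReal_mul (Real.exp_pos _).le, ← ENNReal.ofReal_mul (Real.exp_pos _).le,
          ← Real.exp_add, ← Real.exp_add]
        congr 2; ring
    rw [this, lintegral_indicator measurableSet_Ioi, Measure.restrict_restrict
      measurableSet_Ioi, Set.Ioi_inter_Ioi, max_eq_left hx0.le,
      lintegral_const_mul _ (by fun_prop), cov_lint_exp hT,
      ← ENNReal.ofReal_mul (Real.exp_pos _).le, ← ENNReal.ofReal_mul (by positivity),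
      ← mul_div_assoc, ← Real.exp_add, one_div_mul_eq_div]
    congr 3; ring
  rw [setLIntegral_congr_fun measurableSet_Ioi h, lintegral_const_mul _ (by fun_prop),
    cov_lint_exp hs, ← ENNReal.ofReal_mul (by positivity)]
  congr 1
  simp


lemma cov_joint {Ω : Type*} [MeasurableSpace Ω] (P : Measure Ω) [IsProbabilityMeasure P]
    (H1 H2 : ℝ → Ω → ℝ) (S : ℝ → ℝ → ℝ)
    (hH1meas : Measurable (Function.uncurry H1))
    (hH2meas : Measurable (Function.uncurry H2))
    (hzero : ∀ᵐ ω ∂P, H1 0 ω = 0 ∧ H2 0 ω = 0)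
    (hindep : ∀ s t : ℝ, 0 ≤ s → s ≤ t →
      IndepFun (fun ω => (H1 t ω - H1 s ω, H2 t ω - H2 s ω))
        (fun ω => (H1 s ω, H2 s ω)) P)
    (hincr : ∀ s t α β : ℝ, 0 ≤ s → s ≤ t → 0 ≤ α → 0 ≤ β →
      ∫ ω, Real.exp (-(α * (H1 t ω - H1 s ω)) - β * (H2 t ω - H2 s ω)) ∂P
        = Real.exp (-(t - s) * S α β))
    {η1 η2 : ℝ} (hη1 : 0 < η1) (hη2 : 0 < η2)
    (hT1 : 0 < S η1 0) (hT2 : 0 < S 0 η2) (hS : 0 < S η1 η2) :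
    ∫⁻ ω, (∫⁻ x in Set.Ioi (0 : ℝ), ENNReal.ofReal (Real.exp (-(η1 * H1 x ω)))) *
      (∫⁻ y in Set.Ioi (0 : ℝ), ENNReal.ofReal (Real.exp (-(η2 * H2 y ω)))) ∂P
      = ENNReal.ofReal (1 / (S η1 η2 * S 0 η2)) + ENNReal.ofReal (1 / (S η1 η2 * S η1 0)) := by
  have e1 : Measurable (fun p : ℝ × Ω => ENNReal.ofReal (Real.exp (-(η1 * H1 p.1 p.2)))) := by
    have : Measurable (fun p : ℝ × Ω => H1 p.1 p.2) := hH1meas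
    fun_prop
  have e2 : Measurable (fun p : ℝ × Ω => ENNReal.ofReal (Real.exp (-(η2 * H2 p.1 p.2)))) := by
    have : Measurable (fun p : ℝ × Ω => H2 p.1 p.2) := hH2meas
    fun_prop
  have n2 : Measurable (fun ω =>
      ∫⁻ y in Set.Ioi (0 : ℝ), ENNReal.ofReal (Real.exp (-(η2 * H2 y ω)))) :=
    e2.lintegral_prod_left'
  have e1' : ∀ ω, Measurable (fun x => ENNReal.ofReal (Real.exp (-(η1 * H1 x ω)))) := fun ω =>
    e1.comp (f := fun x : ℝ => (x, ω)) (by fun_prop)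
  have e2' : ∀ ω, Measurable (fun x => ENNReal.ofReal (Real.exp (-(η2 * H2 x ω)))) := fun ω =>
    e2.comp (f := fun x : ℝ => (x, ω)) (by fun_prop)
  have e1'' : ∀ x, Measurable (fun ω => ENNReal.ofReal (Real.exp (-(η1 * H1 x ω)))) := fun x =>
    e1.comp (f := fun ω : Ω => (x, ω)) (by fun_prop)
  have mA : Measurable (fun p : ℝ × ℝ => if p.1 < p.2 then
      ENNReal.ofReal (Real.exp (-((p.2 - p.1) * S 0 η2))) *
        ENNReal.ofReal (Real.exp (-(p.1 * S η1 η2))) else 0) :=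
    Measurable.ite (measurableSet_lt measurable_fst measurable_snd) (by fun_prop) measurable_const
  have mB : Measurable (fun p : ℝ × ℝ => if p.2 ≤ p.1 then
      ENNReal.ofReal (Real.exp (-((p.1 - p.2) * S η1 0))) *
        ENNReal.ofReal (Real.exp (-(p.2 * S η1 η2))) else 0) :=
    Measurable.ite (measurableSet_le measurable_snd measurable_fst) (by fun_prop) measurable_const
  calc _ = ∫⁻ ω, (∫⁻ x in Set.Ioi (0 : ℝ), ENNReal.ofReal (Real.exp (-(η1 * H1 x ω))) *
      (∫⁻ y in Set.Ioi (0 : ℝ), ENNReal.ofReal (Real.exp (-(η2 * H2 y ω))))) ∂P := by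
        refine lintegral_congr fun ω => ?_
        rw [lintegral_mul_const _ (e1' ω)]
    _ = ∫⁻ x in Set.Ioi (0 : ℝ), ∫⁻ ω, ENNReal.ofReal (Real.exp (-(η1 * H1 x ω))) *
      (∫⁻ y in Set.Ioi (0 : ℝ), ENNReal.ofReal (Real.exp (-(η2 * H2 y ω)))) ∂P := by
        refine lintegral_lintegral_swap (Measurable.aemeasurable ?_)
        exact (e1.comp measurable_swap).mul (n2.comp measurable_fst)
    _ = ∫⁻ x in Set.Ioi (0 : ℝ), ∫⁻ y in Set.Ioi (0 : ℝ), ∫⁻ ω,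
          ENNReal.ofReal (Real.exp (-(η1 * H1 x ω))) *
          ENNReal.ofReal (Real.exp (-(η2 * H2 y ω))) ∂P := by
        refine lintegral_congr fun x => ?_
        rw [lintegral_lintegral_swap]
        · refine lintegral_congr fun ω => ?_
          rw [lintegral_const_mul _ (e2' ω)]
        · refine Measurable.aemeasurable ?_
          exact ((e1'' x).comp measurable_snd).mul e2
    _ = ∫⁻ x in Set.Ioi (0 : ℝ), ∫⁻ y in Set.Ioi (0 : ℝ),
          ((if x < y then ENNReal.ofReal (Real.exp (-((y - x) * S 0 η2))) *
              ENNReal.ofReal (Real.exp (-(x * S η1 η2))) else 0) +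
           (if y ≤ x then ENNReal.ofReal (Real.exp (-((x - y) * S η1 0))) *
              ENNReal.ofReal (Real.exp (-(y * S η1 η2))) else 0)) := by
        refine setLIntegral_congr_fun measurableSet_Ioi fun x hx => ?_
        refine setLIntegral_congr_fun measurableSet_Ioi fun y hy => ?_
        have hx0 : (0 : ℝ) < x := hx
        have hy0 : (0 : ℝ) < y := hy
        rcases lt_or_ge x y with h | h
        · simp only [h, if_true, not_le.mpr h, if_false, add_zero]
          rw [← cov_two P H1 H2 S hH1meas hH2meas hzero hindep hincr hx0.le h.le hη1.le hη2.le
            le_rfl hη2.le]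
          refine lintegral_congr fun ω => ?_
          rw [← ENNReal.ofReal_mul (Real.exp_pos _).le, ← ENNReal.ofReal_mul (Real.exp_pos _).le,
            ← Real.exp_add, ← Real.exp_add]
          congr 2; ring
        · simp only [h, if_true, not_lt.mpr h, if_false, zero_add]
          rw [← cov_two P H1 H2 S hH1meas hH2meas hzero hindep hincr hy0.le h hη1.le hη2.le
            hη1.le le_rfl]
          refine lintegral_congr fun ω => ?_
          rw [← ENNReal.ofReal_mul (Real.exp_pos _).le, ← ENNReal.ofReal_mul (Real.exp_pos _).le,
            ← Real.exp_add, ← Real.exp_add]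
          congr 2; ring
    _ = (∫⁻ x in Set.Ioi (0 : ℝ), ∫⁻ y in Set.Ioi (0 : ℝ),
          (if x < y then ENNReal.ofReal (Real.exp (-((y - x) * S 0 η2))) *
              ENNReal.ofReal (Real.exp (-(x * S η1 η2))) else 0)) +
        ∫⁻ x in Set.Ioi (0 : ℝ), ∫⁻ y in Set.Ioi (0 : ℝ),
           (if y ≤ x then ENNReal.ofReal (Real.exp (-((x - y) * S η1 0))) *
              ENNReal.ofReal (Real.exp (-(y * S η1 η2))) else 0) := by
        rw [← lintegral_add_left mA.lintegral_prod_right']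
        refine lintegral_congr fun x => ?_
        rw [← lintegral_add_left]
        exact mA.comp (f := fun y : ℝ => (x, y)) (by fun_prop)
    _ = _ := by
        rw [cov_tri hS hT2 (fun x y => x < y) (fun x y h => h) (fun x y h => not_lt.mpr h.le)]
        rw [lintegral_lintegral_swap mB.aemeasurable]
        rw [cov_tri hS hT1 (fun x y => x ≤ y) (fun x y h => h.le) (fun x y h => not_le.mpr h)]

/-- The expected Laplace transform of a single inverse. -/
lemma cov_marg {Ω : Type*} [MeasurableSpace Ω] (P : Measure Ω) [IsProbabilityMeasure P]
    (H : ℝ → Ω → ℝ) (hH : Measurable (Function.uncurry H)) (hn : ∀ x ω, 0 ≤ H x ω)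
    {η T : ℝ} (hη : 0 < η) (hT : 0 < T)
    (h : ∀ x, 0 ≤ x → ∫⁻ ω, ENNReal.ofReal (Real.exp (-(η * H x ω))) ∂P
      = ENNReal.ofReal (Real.exp (-(x * T)))) :
    ∫⁻ t in Set.Ioi (0 : ℝ), ENNReal.ofReal (Real.exp (-(η * t))) * ∫⁻ ω, covMM H t ω ∂P
      = ENNReal.ofReal (1 / (η * T)) := by
  have e1 : Measurable (fun p : ℝ × Ω => ENNReal.ofReal (Real.exp (-(η * H p.1 p.2)))) := by
    have : Measurable (fun p : ℝ × Ω => H p.1 p.2) := hH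
    fun_prop
  have mM := cov_MM_meas hH
  calc _ = ∫⁻ t in Set.Ioi (0 : ℝ), ∫⁻ ω, ENNReal.ofReal (Real.exp (-(η * t))) * covMM H t ω ∂P := by
        refine lintegral_congr fun t => ?_
        rw [lintegral_const_mul]
        exact mM.comp (f := fun ω : Ω => (t, ω)) (by fun_prop)
    _ = ∫⁻ ω, (∫⁻ t in Set.Ioi (0 : ℝ), ENNReal.ofReal (Real.exp (-(η * t))) * covMM H t ω) ∂P := by
        refine lintegral_lintegral_swap (Measurable.aemeasurable ?_)
        exact Measurable.mul (by fun_prop) mM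
    _ = ENNReal.ofReal (1 / η) * ∫⁻ ω, (∫⁻ x in Set.Ioi (0 : ℝ),
          ENNReal.ofReal (Real.exp (-(η * H x ω)))) ∂P := by
        rw [← lintegral_const_mul _ e1.lintegral_prod_left']
        exact lintegral_congr fun ω => cov_N_eq hH hn hη ω
    _ = ENNReal.ofReal (1 / η) * ∫⁻ x in Set.Ioi (0 : ℝ), ENNReal.ofReal (Real.exp (-(T * x))) := by
        rw [lintegral_lintegral_swap (f := fun ω x => ENNReal.ofReal (Real.exp (-(η * H x ω))))
          (e1.comp measurable_swap).aemeasurable]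
        congr 1
        refine setLIntegral_congr_fun measurableSet_Ioi fun x hx => ?_
        have hx0 : (0 : ℝ) < x := hx
        simp only [h x hx0.le, mul_comm T x]
    _ = _ := by
        rw [cov_lint_exp hT, ← ENNReal.ofReal_mul (by positivity)]
        congr 1
        simp
        ring

/-- Integral of the mixed moment. -/
lemma cov_mixed {Ω : Type*} [MeasurableSpace Ω] (P : Measure Ω) [IsProbabilityMeasure P]
    (H1 H2 : ℝ → Ω → ℝ)
    (hH1meas : Measurable (Function.uncurry H1))
    (hH2meas : Measurable (Function.uncurry H2))
    (hH1nonneg : ∀ x ω, 0 ≤ H1 x ω) (hH2nonneg : ∀ x ω, 0 ≤ H2 x ω)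
    {η1 η2 : ℝ} (hη1 : 0 < η1) (hη2 : 0 < η2) :
    ∫⁻ z, ENNReal.ofReal (Real.exp (-(η1 * z.1))) * ENNReal.ofReal (Real.exp (-(η2 * z.2))) *
        ∫⁻ ω, covMM H1 z.1 ω * covMM H2 z.2 ω ∂P
        ∂((volume.restrict (Set.Ioi (0 : ℝ))).prod (volume.restrict (Set.Ioi (0 : ℝ))))
      = ENNReal.ofReal (1 / η1) * ENNReal.ofReal (1 / η2) *
        ∫⁻ ω, (∫⁻ x in Set.Ioi (0 : ℝ), ENNReal.ofReal (Real.exp (-(η1 * H1 x ω)))) *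
        (∫⁻ y in Set.Ioi (0 : ℝ), ENNReal.ofReal (Real.exp (-(η2 * H2 y ω)))) ∂P := by
  have m1 := cov_MM_meas hH1meas
  have m2 := cov_MM_meas hH2meas
  have m1' : Measurable (fun q : (ℝ × ℝ) × Ω => covMM H1 q.1.1 q.2) :=
    m1.comp (f := fun q : (ℝ × ℝ) × Ω => (q.1.1, q.2)) (by fun_prop)
  have m2' : Measurable (fun q : (ℝ × ℝ) × Ω => covMM H2 q.1.2 q.2) :=
    m2.comp (f := fun q : (ℝ × ℝ) × Ω => (q.1.2, q.2)) (by fun_prop)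
  calc _ = ∫⁻ z, ∫⁻ ω, (ENNReal.ofReal (Real.exp (-(η1 * z.1))) * covMM H1 z.1 ω) *
          (ENNReal.ofReal (Real.exp (-(η2 * z.2))) * covMM H2 z.2 ω) ∂P
        ∂((volume.restrict (Set.Ioi (0 : ℝ))).prod (volume.restrict (Set.Ioi (0 : ℝ)))) := by
        refine lintegral_congr fun z => ?_
        rw [← lintegral_const_mul]
        · exact lintegral_congr fun ω => by ring
        · exact (m1'.mul m2').comp (f := fun ω : Ω => (z, ω)) (by fun_prop)
    _ = ∫⁻ ω, ∫⁻ z, (ENNReal.ofReal (Real.exp (-(η1 * z.1))) * covMM H1 z.1 ω) *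
          (ENNReal.ofReal (Real.exp (-(η2 * z.2))) * covMM H2 z.2 ω) 
        ∂((volume.restrict (Set.Ioi (0 : ℝ))).prod (volume.restrict (Set.Ioi (0 : ℝ)))) ∂P := by
        refine lintegral_lintegral_swap (Measurable.aemeasurable ?_)
        exact (Measurable.mul (by fun_prop) m1').mul (Measurable.mul (by fun_prop) m2')
    _ = _ := by
        have e1 : Measurable (fun p : ℝ × Ω => ENNReal.ofReal (Real.exp (-(η1 * H1 p.1 p.2)))) := by
          have : Measurable (fun p : ℝ × Ω => H1 p.1 p.2) := hH1meas
          fun_prop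
        have e2 : Measurable (fun p : ℝ × Ω => ENNReal.ofReal (Real.exp (-(η2 * H2 p.1 p.2)))) := by
          have : Measurable (fun p : ℝ × Ω => H2 p.1 p.2) := hH2meas
          fun_prop
        have n12 : Measurable (fun ω =>
            (∫⁻ x in Set.Ioi (0 : ℝ), ENNReal.ofReal (Real.exp (-(η1 * H1 x ω)))) *
            (∫⁻ y in Set.Ioi (0 : ℝ), ENNReal.ofReal (Real.exp (-(η2 * H2 y ω))))) :=
          e1.lintegral_prod_left'.mul e2.lintegral_prod_left'
        rw [← lintegral_const_mul _ n12]
        refine lintegral_congr fun ω => ?_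
        have a1 : Measurable (fun t => ENNReal.ofReal (Real.exp (-(η1 * t))) * covMM H1 t ω) :=
          Measurable.mul (by fun_prop) (m1.comp (f := fun t : ℝ => (t, ω)) (by fun_prop))
        have a2 : Measurable (fun t => ENNReal.ofReal (Real.exp (-(η2 * t))) * covMM H2 t ω) :=
          Measurable.mul (by fun_prop) (m2.comp (f := fun t : ℝ => (t, ω)) (by fun_prop))
        rw [lintegral_prod_mul a1.aemeasurable a2.aemeasurable,
          cov_N_eq hH1meas hH1nonneg hη1, cov_N_eq hH2meas hH2nonneg hη2]
        ring

/-- Double Laplace transform of the covariance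
`Cov(L₁(t₁),L₂(t₂)) = E[L₁(t₁)L₂(t₂)] − E[L₁(t₁)]E[L₂(t₂)]`,
with `T₁(η) = S(η,0)` and `T₂(η) = S(0,η)`. -/
theorem laplace_transform_covariance
    {Ω : Type*} [MeasurableSpace Ω] (P : Measure Ω) [IsProbabilityMeasure P]
    (H1 H2 : ℝ → Ω → ℝ) (S : ℝ → ℝ → ℝ)
    (hH1meas : Measurable (Function.uncurry H1))
    (hH2meas : Measurable (Function.uncurry H2))
    (hH1nonneg : ∀ x ω, 0 ≤ H1 x ω) (hH2nonneg : ∀ x ω, 0 ≤ H2 x ω)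
    (hzero : ∀ᵐ ω ∂P, H1 0 ω = 0 ∧ H2 0 ω = 0)
    (hSnonneg : ∀ α β : ℝ, 0 ≤ α → 0 ≤ β → 0 ≤ S α β)
    (hindep : ∀ s t : ℝ, 0 ≤ s → s ≤ t →
      IndepFun (fun ω => (H1 t ω - H1 s ω, H2 t ω - H2 s ω))
        (fun ω => (H1 s ω, H2 s ω)) P)
    (hincr : ∀ s t α β : ℝ, 0 ≤ s → s ≤ t → 0 ≤ α → 0 ≤ β →
      ∫ ω, Real.exp (-(α * (H1 t ω - H1 s ω)) - β * (H2 t ω - H2 s ω)) ∂P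
        = Real.exp (-(t - s) * S α β))
    (hpath : ∀ᵐ ω ∂P,
      (∀ x y : ℝ, 0 ≤ x → x ≤ y → H1 x ω ≤ H1 y ω) ∧
      (∀ M : ℝ, ∃ x : ℝ, 0 ≤ x ∧ H1 x ω > M) ∧
      (∀ x y : ℝ, 0 ≤ x → x ≤ y → H2 x ω ≤ H2 y ω) ∧
      (∀ M : ℝ, ∃ x : ℝ, 0 ≤ x ∧ H2 x ω > M))
    (L1 L2 : ℝ → Ω → ℝ)
    (hL1 : ∀ t ω, L1 t ω = sInf {x : ℝ | 0 ≤ x ∧ H1 x ω > t})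
    (hL2 : ∀ t ω, L2 t ω = sInf {x : ℝ | 0 ≤ x ∧ H2 x ω > t})
    (η1 η2 : ℝ) (hη1 : 0 < η1) (hη2 : 0 < η2)
    (hT1 : 0 < S η1 0) (hT2 : 0 < S 0 η2) (hS : 0 < S η1 η2) :
    ∫ t1 in Set.Ioi (0 : ℝ), ∫ t2 in Set.Ioi (0 : ℝ),
        Real.exp (-(η1 * t1) - η2 * t2) *
          ((∫ ω, L1 t1 ω * L2 t2 ω ∂P) - (∫ ω, L1 t1 ω ∂P) * (∫ ω, L2 t2 ω ∂P))
      = (S η1 0 + S 0 η2 - S η1 η2) / (η1 * η2 * S η1 0 * S 0 η2 * S η1 η2) := by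
  have m1 := cov_MM_meas hH1meas
  have m2 := cov_MM_meas hH2meas
  have m1' : Measurable (fun q : (ℝ × ℝ) × Ω => covMM H1 q.1.1 q.2) :=
    m1.comp (f := fun q : (ℝ × ℝ) × Ω => (q.1.1, q.2)) (by fun_prop)
  have m2' : Measurable (fun q : (ℝ × ℝ) × Ω => covMM H2 q.1.2 q.2) :=
    m2.comp (f := fun q : (ℝ × ℝ) × Ω => (q.1.2, q.2)) (by fun_prop)
  have m1t : ∀ t, Measurable (covMM H1 t) := fun t =>
    m1.comp (f := fun ω : Ω => (t, ω)) (by fun_prop)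
  have m2t : ∀ t, Measurable (covMM H2 t) := fun t =>
    m2.comp (f := fun ω : Ω => (t, ω)) (by fun_prop)
  have ma : Measurable (fun z : ℝ × ℝ => ∫⁻ ω, covMM H1 z.1 ω * covMM H2 z.2 ω ∂P) :=
    (m1'.mul m2').lintegral_prod_right'
  have mb : Measurable (fun t : ℝ => ∫⁻ ω, covMM H1 t ω ∂P) := m1.lintegral_prod_right'
  have mc : Measurable (fun t : ℝ => ∫⁻ ω, covMM H2 t ω ∂P) := m2.lintegral_prod_right'
  have f1 : ∀ᵐ ω ∂P, ∀ t, L1 t ω = (covMM H1 t ω).toReal ∧ covMM H1 t ω < ⊤ := by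
    filter_upwards [hpath] with ω hω t
    have h := cov_L_eq H1 ω hω.1 hω.2.1 t
    rw [h, hL1, ENNReal.toReal_ofReal (Real.sInf_nonneg fun x hx => hx.1)]
    exact ⟨rfl, ENNReal.ofReal_lt_top⟩
  have f2 : ∀ᵐ ω ∂P, ∀ t, L2 t ω = (covMM H2 t ω).toReal ∧ covMM H2 t ω < ⊤ := by
    filter_upwards [hpath] with ω hω t
    have h := cov_L_eq H2 ω hω.2.2.1 hω.2.2.2 t
    rw [h, hL2, ENNReal.toReal_ofReal (Real.sInf_nonneg fun x hx => hx.1)]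
    exact ⟨rfl, ENNReal.ofReal_lt_top⟩
  have E1 : ∀ t, ∫ ω, L1 t ω ∂P = (∫⁻ ω, covMM H1 t ω ∂P).toReal := by
    intro t
    rw [← integral_toReal (m1t t).aemeasurable (f1.mono fun ω h => (h t).2)]
    exact integral_congr_ae (f1.mono fun ω h => (h t).1)
  have E2 : ∀ t, ∫ ω, L2 t ω ∂P = (∫⁻ ω, covMM H2 t ω ∂P).toReal := by
    intro t
    rw [← integral_toReal (m2t t).aemeasurable (f2.mono fun ω h => (h t).2)]
    exact integral_congr_ae (f2.mono fun ω h => (h t).1)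
  have E12 : ∀ t1 t2, ∫ ω, L1 t1 ω * L2 t2 ω ∂P
      = (∫⁻ ω, covMM H1 t1 ω * covMM H2 t2 ω ∂P).toReal := by
    intro t1 t2
    have m12 : Measurable (fun ω => covMM H1 t1 ω * covMM H2 t2 ω) := (m1t t1).mul (m2t t2)
    rw [← integral_toReal m12.aemeasurable]
    · refine integral_congr_ae ?_
      filter_upwards [f1, f2] with ω h1 h2
      rw [(h1 t1).1, (h2 t2).1, ENNReal.toReal_mul]
    · filter_upwards [f1, f2] with ω h1 h2
      exact ENNReal.mul_lt_top (h1 t1).2 (h2 t2).2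
  -- the two double integrals
  have hA := cov_mixed P H1 H2 hH1meas hH2meas hH1nonneg hH2nonneg hη1 hη2
  rw [cov_joint P H1 H2 S hH1meas hH2meas hzero hindep hincr hη1 hη2 hT1 hT2 hS] at hA
  have hb := cov_marg P H1 hH1meas hH1nonneg hη1 hT1 (fun x hx => by
    rw [← cov_single0 P H1 H2 S hzero hincr hx hη1.le le_rfl]; simp)
  have hc := cov_marg P H2 hH2meas hH2nonneg hη2 hT2 (fun x hx => by
    rw [← cov_single0 P H1 H2 S hzero hincr hx le_rfl hη2.le]; simp)
  set μ := (volume.restrict (Set.Ioi (0 : ℝ))).prod (volume.restrict (Set.Ioi (0 : ℝ))) with hμ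
  set F : ℝ × ℝ → ENNReal := fun z =>
    ENNReal.ofReal (Real.exp (-(η1 * z.1))) * ENNReal.ofReal (Real.exp (-(η2 * z.2))) *
        ∫⁻ ω, covMM H1 z.1 ω * covMM H2 z.2 ω ∂P with hF
  set G : ℝ × ℝ → ENNReal := fun z =>
    (ENNReal.ofReal (Real.exp (-(η1 * z.1))) * ∫⁻ ω, covMM H1 z.1 ω ∂P) *
    (ENNReal.ofReal (Real.exp (-(η2 * z.2))) * ∫⁻ ω, covMM H2 z.2 ω ∂P) with hG
  have mF : Measurable F := Measurable.mul (by fun_prop) ma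
  have mG1 : Measurable fun t =>
    ENNReal.ofReal (Real.exp (-(η1 * t))) * ∫⁻ ω, covMM H1 t ω ∂P := by fun_prop
  have mG2 : Measurable fun t =>
    ENNReal.ofReal (Real.exp (-(η2 * t))) * ∫⁻ ω, covMM H2 t ω ∂P := by fun_prop
  have mG : Measurable G := (mG1.comp measurable_fst).mul (mG2.comp measurable_snd)
  have hB : ∫⁻ z, G z ∂μ =
      ENNReal.ofReal (1 / (η1 * S η1 0)) * ENNReal.ofReal (1 / (η2 * S 0 η2)) := by
    rw [hG, hμ, lintegral_prod_mul mG1.aemeasurable mG2.aemeasurable, hb, hc]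
  have hAfin : ∫⁻ z, F z ∂μ ≠ ⊤ := by
    rw [hA]
    exact ENNReal.mul_ne_top (ENNReal.mul_ne_top ENNReal.ofReal_ne_top ENNReal.ofReal_ne_top)
      (ENNReal.add_ne_top.mpr ⟨ENNReal.ofReal_ne_top, ENNReal.ofReal_ne_top⟩)
  have hBfin : ∫⁻ z, G z ∂μ ≠ ⊤ := by
    rw [hB]
    exact ENNReal.mul_ne_top ENNReal.ofReal_ne_top ENNReal.ofReal_ne_top
  have iF := integrable_toReal_of_lintegral_ne_top mF.aemeasurable hAfin
  have iG := integrable_toReal_of_lintegral_ne_top mG.aemeasurable hBfin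
  have hpt : ∀ t1 t2 : ℝ, Real.exp (-(η1 * t1) - η2 * t2) *
          ((∫ ω, L1 t1 ω * L2 t2 ω ∂P) - (∫ ω, L1 t1 ω ∂P) * (∫ ω, L2 t2 ω ∂P))
      = (F (t1, t2)).toReal - (G (t1, t2)).toReal := by
    intro t1 t2
    rw [E1, E2, E12, hF, hG]
    simp only [ENNReal.toReal_mul, ENNReal.toReal_ofReal (Real.exp_pos _).le]
    rw [sub_eq_add_neg (-(η1 * t1)), Real.exp_add]
    ring
  simp only [hpt]
  have hprod := integral_prod (fun z => (F z).toReal - (G z).toReal) (iF.sub iG)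
  rw [← hprod, ← hμ, integral_sub iF iG,
    integral_toReal mF.aemeasurable (ae_lt_top mF hAfin),
    integral_toReal mG.aemeasurable (ae_lt_top mG hBfin), hA, hB,
    ENNReal.toReal_mul, ENNReal.toReal_mul, ENNReal.toReal_mul,
    ENNReal.toReal_add ENNReal.ofReal_ne_top ENNReal.ofReal_ne_top,
    ENNReal.toReal_ofReal (by positivity), ENNReal.toReal_ofReal (by positivity),
    ENNReal.toReal_ofReal (by positivity), ENNReal.toReal_ofReal (by positivity),
    ENNReal.toReal_ofReal (by positivity), ENNReal.toReal_ofReal (by positivity)]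
  field_simp
end

section
/- For all ξ₁, ξ₂, η₁, η₂ > 0 with T₁(η₁) > 0, T₂(η₂) > 0 and S(η₁,η₂) > 0, writing T₁ = T₁(η₁), T₂ = T₂(η₂), S = S(η₁,η₂): ∫₀^∞ ∫₀^∞ e^{−η₁t₁−η₂t₂} E[exp(−ξ₁ L₁(t₁) − ξ₂ L₂(t₂))] dt₁ dt₂ = T₁T₂ / (η₁η₂(ξ₁+T₁)(ξ₂+T₂)) + ξ₁ξ₂(T₁+T₂−S) / (η₁η₂(ξ₁+T₁)(ξ₂+T₂)(ξ₁+ξ₂+S)). -/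
open MeasureTheory ProbabilityTheory

lemma aux_int_s10 {α β : Type*} [MeasurableSpace α] [MeasurableSpace β] {μ : Measure α} {ν : Measure β}
    [SFinite μ] [SFinite ν] {a : α → ℝ} {h : β → ℝ} {g : α → β → ℝ}
    (ha : Integrable a μ) (hh : Integrable h ν) (hg : Measurable (Function.uncurry g))
    (hb : ∀ s w, |g s w| ≤ 1) :
    Integrable (Function.uncurry fun s w => g s w * (a s * h w)) (μ.prod ν) := by
  exact (ha.mul_prod hh).bdd_mul (f := Function.uncurry g) (c := 1) hg.aestronglyMeasurable
    (Filter.Eventually.of_forall fun p => hb p.1 p.2)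

lemma swap1 {α β : Type*} [MeasurableSpace α] [MeasurableSpace β] {μ : Measure α} {ν : Measure β}
    [SFinite μ] [SFinite ν] {a : α → ℝ} {h : β → ℝ} {g : α → β → ℝ}
    (ha : Integrable a μ) (hh : Integrable h ν) (hg : Measurable (Function.uncurry g))
    (hb : ∀ s w, |g s w| ≤ 1) :
    ∫ s, a s * ∫ w, g s w * h w ∂ν ∂μ = ∫ w, (∫ s, a s * g s w ∂μ) * h w ∂ν := by
  have := integral_integral_swap (aux_int_s10 ha hh hg hb)
  calc _ = ∫ s, ∫ w, g s w * (a s * h w) ∂ν ∂μ := by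
        congr 1; ext s; rw [← integral_const_mul]; congr 1; ext w; ring
    _ = _ := this
    _ = _ := by
        congr 1; ext w; rw [← integral_mul_const]; congr 1; ext s; ring

lemma fub {Ω : Type*} [MeasurableSpace Ω] {P : Measure Ω} [IsProbabilityMeasure P]
    {μ ν : Measure ℝ} [SFinite μ] [SFinite ν] {a b : ℝ → ℝ} {g1 g2 : ℝ → Ω → ℝ}
    (ha : Integrable a μ) (hb : Integrable b ν)
    (hg1 : Measurable (Function.uncurry g1)) (hb1 : ∀ s w, |g1 s w| ≤ 1)
    (hg2 : Measurable (Function.uncurry g2)) (hb2 : ∀ s w, |g2 s w| ≤ 1) :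
    ∫ s, ∫ t, a s * b t * (∫ w, g1 s w * g2 t w ∂P) ∂ν ∂μ
      = ∫ w, (∫ s, a s * g1 s w ∂μ) * (∫ t, b t * g2 t w ∂ν) ∂P := by
  have hB : Integrable (fun w => ∫ t, b t * g2 t w ∂ν) P := by
    have := (aux_int_s10 hb (integrable_const (1:ℝ) (μ := P)) hg2 hb2).integral_prod_right
    refine this.congr (Filter.Eventually.of_forall fun w => ?_)
    simp [Function.uncurry, mul_comm]
  have hi : ∀ s, Integrable (g1 s) P := fun s =>
    Integrable.of_bound (hg1.comp measurable_prodMk_left).aestronglyMeasurable 1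
      (Filter.Eventually.of_forall fun w => hb1 s w)
  rw [← swap1 ha hB hg1 hb1]
  congr 1; ext s
  simp_rw [mul_assoc]
  rw [integral_const_mul]
  congr 1
  have := swap1 hb (hi s) hg2 hb2
  simp_rw [mul_comm (g1 s _)]
  exact this

lemma int_exp {k : ℝ} (hk : 0 < k) : ∫ x in Set.Ioi (0:ℝ), Real.exp (-(k * x)) = 1 / k := by
  have := integral_exp_mul_Ioi (a := -k) (by linarith) 0
  simpa [neg_mul] using this

lemma int_exp' {k : ℝ} (hk : 0 < k) (c : ℝ) :
    ∫ x in Set.Ioi c, Real.exp (-(k * x)) = Real.exp (-(k * c)) / k := by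
  have := integral_exp_mul_Ioi (a := -k) (by linarith) c
  simpa [neg_mul] using this

lemma intg_exp {k : ℝ} (hk : 0 < k) (c : ℝ) :
    Integrable (fun x => Real.exp (-(k * x))) (volume.restrict (Set.Ioi c)) := by
  have := integrableOn_exp_mul_Ioi (a := -k) (by linarith) c
  simpa [neg_mul, IntegrableOn] using this

lemma path_eq (h : ℝ → ℝ) (hm : ∀ x y : ℝ, 0 ≤ x → x ≤ y → h x ≤ h y)
    (hu : ∀ M : ℝ, ∃ x : ℝ, 0 ≤ x ∧ h x > M) (ξ : ℝ) (hξ : 0 < ξ) (t : ℝ) :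
    Real.exp (-(ξ * sInf {x : ℝ | 0 ≤ x ∧ h x > t}))
     = ∫ x in Set.Ioi (0:ℝ), (if t < h x then (1:ℝ) else 0) * (ξ * Real.exp (-(ξ * x))) := by
  set A := {x : ℝ | 0 ≤ x ∧ h x > t} with hA
  have hne : A.Nonempty := hu t
  have hbd : BddBelow A := ⟨0, fun x hx => hx.1⟩
  have h0 : 0 ≤ sInf A := le_csInf hne fun x hx => hx.1
  have e1 : ∫ x in Set.Ioi (0:ℝ), (if t < h x then (1:ℝ) else 0) * (ξ * Real.exp (-(ξ * x)))
      = ∫ x in Set.Ioi (0:ℝ), (Set.Ioi (sInf A)).indicator (fun x => ξ * Real.exp (-(ξ * x))) x := by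
    apply integral_congr_ae
    have : ∀ᵐ x ∂(volume.restrict (Set.Ioi (0:ℝ))), x ≠ sInf A :=
      ae_restrict_of_ae (by simp [ae_iff, measure_singleton])
    filter_upwards [this, ae_restrict_mem measurableSet_Ioi] with x hx hx0
    have hx0' : 0 < x := hx0
    rcases lt_or_gt_of_ne hx with hlt | hgt
    · have : ¬ t < h x := fun hh => absurd (csInf_le hbd (show x ∈ A from ⟨hx0'.le, hh⟩)) (not_le.2 hlt)
      rw [if_neg this, Set.indicator_of_notMem (by simpa using hlt.le)]; simp
    · obtain ⟨y, hy, hyx⟩ := exists_lt_of_csInf_lt hne hgt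
      have : t < h x := lt_of_lt_of_le hy.2 (hm y x hy.1 hyx.le)
      rw [if_pos this, Set.indicator_of_mem (by simpa using hgt)]; simp
  rw [e1, setIntegral_indicator measurableSet_Ioi,
    Set.inter_eq_right.2 (Set.Ioi_subset_Ioi h0), integral_const_mul, int_exp' hξ]
  field_simp

/-- the transform in time of the indicator -/
lemma time_int {η : ℝ} (hη : 0 < η) {c : ℝ} (hc : 0 ≤ c) :
    ∫ t in Set.Ioi (0:ℝ), Real.exp (-(η * t)) * (if t < c then (1:ℝ) else 0)
      = (1 - Real.exp (-(η * c))) / η := by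
  have e : ∀ t, Real.exp (-(η * t)) * (if t < c then (1:ℝ) else 0)
      = Real.exp (-(η * t)) - (Set.Ici c).indicator (fun t => Real.exp (-(η * t))) t := by
    intro t
    by_cases h : t < c
    · simp [h]
    · simp [h, not_lt.1 h]
  simp_rw [e]
  rw [integral_sub (intg_exp hη 0) ((intg_exp hη 0).indicator measurableSet_Ici),
    setIntegral_indicator measurableSet_Ici, int_exp hη]
  have : ∫ x in Set.Ioi 0 ∩ Set.Ici c, Real.exp (-(η * x)) = Real.exp (-(η * c)) / η := by
    rw [← int_exp' hη c]
    apply setIntegral_congr_set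
    have h1 : (Set.Ioi (0:ℝ) ∩ Set.Ici c : Set ℝ) =ᵐ[volume] (Set.Ioi 0 ∩ Set.Ioi c : Set ℝ) :=
      (Filter.EventuallyEq.refl _ _).inter Ioi_ae_eq_Ici.symm
    rwa [Set.inter_eq_right.2 (Set.Ioi_subset_Ioi hc)] at h1
  rw [this]; ring

noncomputable def ff {Ω : Type*} (H : ℝ → Ω → ℝ) (ξ t : ℝ) (w : Ω) : ℝ :=
  ∫ x in Set.Ioi (0:ℝ), (if t < H x w then (1:ℝ) else 0) * (ξ * Real.exp (-(ξ * x)))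

lemma ff_meas {Ω : Type*} [MeasurableSpace Ω] {H : ℝ → Ω → ℝ}
    (hH : Measurable (Function.uncurry H)) (ξ : ℝ) :
    Measurable (Function.uncurry (ff H ξ)) := by
  have : StronglyMeasurable (fun p : (ℝ × Ω) × ℝ =>
      (if p.1.1 < H p.2 p.1.2 then (1:ℝ) else 0) * (ξ * Real.exp (-(ξ * p.2)))) := by
    apply Measurable.stronglyMeasurable
    have h2 : Measurable (fun p : (ℝ × Ω) × ℝ => H p.2 p.1.2) :=
      hH.comp (measurable_snd.prodMk (measurable_snd.comp measurable_fst))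
    refine Measurable.mul (Measurable.ite (measurableSet_lt (by fun_prop) h2) measurable_const measurable_const) (by fun_prop)
  exact (this.integral_prod_right (ν := volume.restrict (Set.Ioi (0:ℝ)))).measurable

lemma ff_bd {Ω : Type*} (H : ℝ → Ω → ℝ) {ξ : ℝ} (hξ : 0 < ξ) (t : ℝ) (w : Ω) :
    |ff H ξ t w| ≤ 1 := by
  have h : ∫ x in Set.Ioi (0:ℝ), ξ * Real.exp (-(ξ * x)) = 1 := by
    rw [integral_const_mul, int_exp hξ]; field_simp
  rw [← h, ← Real.norm_eq_abs]
  refine norm_integral_le_of_norm_le ((intg_exp hξ 0).const_mul ξ)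
    (Filter.Eventually.of_forall fun x => ?_)
  have : 0 < ξ * Real.exp (-(ξ * x)) := by positivity
  rw [norm_mul, Real.norm_of_nonneg this.le]
  split_ifs <;> simp [this.le]

lemma ff_time {Ω : Type*} [MeasurableSpace Ω] {H : ℝ → Ω → ℝ}
    (hH : Measurable (Function.uncurry H)) (hn : ∀ x w, 0 ≤ H x w) {ξ η : ℝ}
    (hξ : 0 < ξ) (hη : 0 < η) (w : Ω) :
    ∫ t in Set.Ioi (0:ℝ), Real.exp (-(η * t)) * ff H ξ t w
      = ∫ x in Set.Ioi (0:ℝ), (ξ / η * Real.exp (-(ξ * x))) * (1 - Real.exp (-(η * H x w))) := by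
  have hm : Measurable (fun x => H x w) := hH.comp measurable_prodMk_right
  have := swap1 (g := fun t x => if t < H x w then (1:ℝ) else 0) (intg_exp hη 0)
    ((intg_exp hξ 0).const_mul ξ)
    (Measurable.ite (measurableSet_lt measurable_fst (hm.comp measurable_snd))
      measurable_const measurable_const)
    (by intro s x; split_ifs <;> simp)
  unfold ff
  rw [this]
  congr 1; ext x
  rw [time_int hη (hn x w)]
  ring

noncomputable def kk (S T x y : ℝ) : ℝ :=
  if 0 < x ∧ x < y then Real.exp (-(x * S) - (y - x) * T) else 0

lemma kk_meas (S T : ℝ) : Measurable (Function.uncurry (kk S T)) := by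
  refine Measurable.ite (MeasurableSet.inter (measurableSet_lt measurable_const measurable_fst)
    (measurableSet_lt measurable_fst measurable_snd)) ?_ measurable_const
  fun_prop

lemma kk_bd {S T : ℝ} (hS : 0 < S) (hT : 0 < T) (x y : ℝ) : |kk S T x y| ≤ 1 := by
  unfold kk
  split_ifs with h
  · rw [abs_of_pos (Real.exp_pos _), Real.exp_le_one_iff]
    nlinarith [mul_pos h.1 hS, mul_pos (sub_pos.2 h.2) hT]
  · simp

lemma kk_int {S T ξ : ℝ} (hT : 0 < T) (hξ : 0 < ξ) {x : ℝ} (hx : 0 < x) :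
    ∫ y in Set.Ioi (0:ℝ), Real.exp (-(ξ * y)) * kk S T x y
      = Real.exp (-((ξ + S) * x)) / (ξ + T) := by
  have e : ∀ y, Real.exp (-(ξ * y)) * kk S T x y = (Set.Ioi x).indicator
      (fun y => Real.exp (-(x * S) + x * T) * Real.exp (-((ξ + T) * y))) y := by
    intro y
    unfold kk
    by_cases h : x < y
    · rw [if_pos ⟨hx, h⟩, Set.indicator_of_mem (by simpa using h), ← Real.exp_add, ← Real.exp_add]
      congr 1; ring
    · rw [if_neg (fun h' => h h'.2), Set.indicator_of_notMem (by simpa using h)]; simp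
  simp_rw [e]
  rw [setIntegral_indicator measurableSet_Ioi, Set.inter_eq_right.2 (Set.Ioi_subset_Ioi hx.le),
    integral_const_mul, int_exp' (by linarith), ← mul_div_assoc, ← Real.exp_add]
  congr 2; ring

lemma split4 {μ : Measure ℝ} {f g u v : ℝ → ℝ} (hf : Integrable f μ) (hg : Integrable g μ)
    (hu : Integrable u μ) (hv : Integrable v μ) (p q r : ℝ) :
    ∫ x, (p * f x - q * g x + r * u x + v x) ∂μ
      = p * ∫ x, f x ∂μ - q * ∫ x, g x ∂μ + r * ∫ x, u x ∂μ + ∫ x, v x ∂μ := by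
  have a : Integrable (fun x => p * f x - q * g x) μ := (hf.const_mul p).sub (hg.const_mul q)
  have b : Integrable (fun x => p * f x - q * g x + r * u x) μ := a.add (hu.const_mul r)
  rw [integral_add b hv, integral_add a (hu.const_mul r),
    integral_sub (hf.const_mul p) (hg.const_mul q), integral_const_mul, integral_const_mul,
    integral_const_mul]

lemma final_int {ξ1 ξ2 T1 T2 S : ℝ} (hξ1 : 0 < ξ1) (hξ2 : 0 < ξ2) (hT1 : 0 < T1) (hT2 : 0 < T2)
    (hS : 0 < S) (E : ℝ → ℝ → ℝ)
    (hE1 : ∀ x y, 0 < x → x ≤ y → E x y = 1 - Real.exp (-(x * T1)) - Real.exp (-(y * T2)) +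
      Real.exp (-(x * S) - (y - x) * T2))
    (hE2 : ∀ x y, 0 < y → y ≤ x → E x y = 1 - Real.exp (-(x * T1)) - Real.exp (-(y * T2)) +
      Real.exp (-(y * S) - (x - y) * T1)) (c d : ℝ) :
    ∫ x in Set.Ioi (0:ℝ), ∫ y in Set.Ioi (0:ℝ),
      (c * Real.exp (-(ξ1 * x))) * (d * Real.exp (-(ξ2 * y))) * E x y
    = c * d * (1 / (ξ1 * ξ2) - 1 / ((ξ1 + T1) * ξ2) - 1 / (ξ1 * (ξ2 + T2))
      + 1 / (ξ1 + ξ2 + S) * (1 / (ξ1 + T1) + 1 / (ξ2 + T2))) := by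
  set μ := volume.restrict (Set.Ioi (0:ℝ)) with hμ
  have i1 := intg_exp hξ1 0
  have i2 := intg_exp hξ2 0
  have m2 : Measurable (Function.uncurry fun x y => kk S T1 y x) :=
    (kk_meas S T1).comp measurable_swap
  have jj := aux_int_s10 i1 i2 m2 (fun x y => kk_bd hS hT1 y x)
  have jl := jj.integral_prod_left
  have hsw := swap1 i1 i2 m2 (fun x y => kk_bd hS hT1 y x)
  have inner : ∀ x, 0 < x → ∫ y in Set.Ioi (0:ℝ),
      (c * Real.exp (-(ξ1 * x))) * (d * Real.exp (-(ξ2 * y))) * E x y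
      = c * d * ((1 / ξ2 - 1 / (ξ2 + T2)) * Real.exp (-(ξ1 * x))
          - 1 / ξ2 * Real.exp (-((ξ1 + T1) * x))
          + 1 / (ξ2 + T2) * Real.exp (-((ξ1 + ξ2 + S) * x))
          + Real.exp (-(ξ1 * x)) * ∫ y in Set.Ioi (0:ℝ), kk S T1 y x * Real.exp (-(ξ2 * y))) := by
    intro x hx
    have ia : Integrable (fun y => Real.exp (-(ξ2 * y)) * kk S T2 x y) μ :=
      i2.mul_bdd (c := 1) ((kk_meas S T2).comp measurable_prodMk_left).aestronglyMeasurable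
        (Filter.Eventually.of_forall fun y => kk_bd hS hT2 x y)
    have ib : Integrable (fun y => kk S T1 y x * Real.exp (-(ξ2 * y))) μ :=
      i2.bdd_mul (c := 1) ((kk_meas S T1).comp measurable_prodMk_right).aestronglyMeasurable
        (Filter.Eventually.of_forall fun y => kk_bd hS hT1 y x)
    have i3 := intg_exp (k := ξ2 + T2) (by linarith) 0
    have e : ∫ y in Set.Ioi (0:ℝ),
      (c * Real.exp (-(ξ1 * x))) * (d * Real.exp (-(ξ2 * y))) * E x y
      = ∫ y in Set.Ioi (0:ℝ), (c * d * Real.exp (-(ξ1 * x))) *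
        ((1 - Real.exp (-(x * T1))) * Real.exp (-(ξ2 * y)) - 1 * Real.exp (-((ξ2 + T2) * y))
          + 1 * (Real.exp (-(ξ2 * y)) * kk S T2 x y) + kk S T1 y x * Real.exp (-(ξ2 * y))) := by
      apply integral_congr_ae
      have : ∀ᵐ y ∂μ, y ≠ x :=
        ae_restrict_of_ae (by simp [ae_iff, measure_singleton])
      filter_upwards [this, ae_restrict_mem measurableSet_Ioi] with y hy hy0
      have hy0' : 0 < y := hy0
      have e0 : Real.exp (-((ξ2 + T2) * y)) = Real.exp (-(ξ2 * y)) * Real.exp (-(y * T2)) := by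
        rw [← Real.exp_add]; congr 1; ring
      rw [e0]
      rcases lt_or_gt_of_ne hy with h | h
      · have k1 : kk S T2 x y = 0 := if_neg (fun h' => by linarith [h'.2])
        have k2 : kk S T1 y x = Real.exp (-(y * S) - (x - y) * T1) := if_pos ⟨hy0', h⟩
        rw [k1, k2, hE2 x y hy0' h.le]; ring
      · have k1 : kk S T1 y x = 0 := if_neg (fun h' => by linarith [h'.2])
        have k2 : kk S T2 x y = Real.exp (-(x * S) - (y - x) * T2) := if_pos ⟨hx, h⟩
        rw [k1, k2, hE1 x y hx h.le]; ring
    rw [e, integral_const_mul, split4 i2 i3 ia ib, int_exp hξ2, int_exp (by linarith), kk_int hT2 hξ2 hx]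
    have e1 : Real.exp (-((ξ1 + T1) * x)) = Real.exp (-(ξ1 * x)) * Real.exp (-(x * T1)) := by
      rw [← Real.exp_add]; congr 1; ring
    have e2 : Real.exp (-((ξ1 + ξ2 + S) * x))
        = Real.exp (-(ξ1 * x)) * Real.exp (-((ξ2 + S) * x)) := by
      rw [← Real.exp_add]; congr 1; ring
    rw [e1, e2]; ring
  have jl' : Integrable (fun x => Real.exp (-(ξ1 * x)) *
      ∫ y in Set.Ioi (0:ℝ), kk S T1 y x * Real.exp (-(ξ2 * y))) μ := by
    refine jl.congr (Filter.Eventually.of_forall fun x => ?_)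
    simp only [Function.uncurry]
    rw [← integral_const_mul]; congr 1; ext y; ring
  have J2 : ∫ x in Set.Ioi (0:ℝ), Real.exp (-(ξ1 * x)) *
      ∫ y in Set.Ioi (0:ℝ), kk S T1 y x * Real.exp (-(ξ2 * y))
      = 1 / (ξ1 + ξ2 + S) * (1 / (ξ1 + T1)) := by
    rw [hsw]
    rw [setIntegral_congr_fun (g := fun y => 1 / (ξ1 + T1) * Real.exp (-((ξ1 + ξ2 + S) * y)))
      measurableSet_Ioi, integral_const_mul, int_exp (by linarith)]
    · ring
    · intro y hy
      dsimp only
      rw [kk_int hT1 hξ1 hy]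
      have e2 : Real.exp (-((ξ1 + ξ2 + S) * y))
        = Real.exp (-((ξ1 + S) * y)) * Real.exp (-(ξ2 * y)) := by
        rw [← Real.exp_add]; congr 1; ring
      rw [e2]; ring
  rw [setIntegral_congr_fun measurableSet_Ioi (fun x hx => inner x hx)]
  have i4 := intg_exp (k := ξ1 + T1) (by linarith) 0
  have i5 := intg_exp (k := ξ1 + ξ2 + S) (by linarith) 0
  rw [integral_const_mul, split4 i1 i4 i5 jl', J2, int_exp hξ1, int_exp (by linarith), int_exp (by linarith)]
  have : ξ1 + T1 ≠ 0 := by positivity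
  have : ξ2 + T2 ≠ 0 := by positivity
  have : ξ1 + ξ2 + S ≠ 0 := by positivity
  field_simp
  ring

lemma joint {Ω : Type*} [MeasurableSpace Ω] (P : Measure Ω) [IsProbabilityMeasure P]
    (H1 H2 : ℝ → Ω → ℝ) (S : ℝ → ℝ → ℝ)
    (hm1 : ∀ x, Measurable (H1 x)) (hm2 : ∀ x, Measurable (H2 x))
    (hzero : ∀ᵐ ω ∂P, H1 0 ω = 0 ∧ H2 0 ω = 0)
    (hindep : ∀ s t : ℝ, 0 ≤ s → s ≤ t →
      IndepFun (fun ω => (H1 t ω - H1 s ω, H2 t ω - H2 s ω))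
        (fun ω => (H1 s ω, H2 s ω)) P)
    (hincr : ∀ s t α β : ℝ, 0 ≤ s → s ≤ t → 0 ≤ α → 0 ≤ β →
      ∫ ω, Real.exp (-(α * (H1 t ω - H1 s ω)) - β * (H2 t ω - H2 s ω)) ∂P
        = Real.exp (-(t - s) * S α β)) {x y α β a b : ℝ} (hx : 0 ≤ x) (hxy : x ≤ y)
    (hα : 0 ≤ α) (hβ : 0 ≤ β) (ha : 0 ≤ a) (hb : 0 ≤ b) :
    ∫ ω, Real.exp (-(a * (H1 y ω - H1 x ω)) - b * (H2 y ω - H2 x ω)) *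
      Real.exp (-(α * H1 x ω) - β * H2 x ω) ∂P =
    Real.exp (-(x * S α β) - (y - x) * S a b) := by
  have h := (hindep x y hx hxy).integral_fun_comp_mul_comp
    (f := fun p : ℝ × ℝ => Real.exp (-(a * p.1) - b * p.2))
    (g := fun p : ℝ × ℝ => Real.exp (-(α * p.1) - β * p.2))
    (by have := hm1 x; have := hm1 y; have := hm2 x; have := hm2 y; fun_prop)
    (by have := hm1 x; have := hm2 x; fun_prop)
    (by fun_prop) (by fun_prop)
  simp only at h
  rw [h, hincr x y a b hx hxy ha hb]
  have h2 := hincr 0 x α β le_rfl hx hα hβ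
  have : ∫ ω, Real.exp (-(α * H1 x ω) - β * H2 x ω) ∂P = Real.exp (-(x - 0) * S α β) := by
    rw [← h2]
    apply integral_congr_ae
    filter_upwards [hzero] with ω hω
    rw [hω.1, hω.2]; simp
  rw [this, ← Real.exp_add]
  congr 1; ring

/-- Space-time double Laplace transform of the inverse of a
bivariate subordinator, with `T₁ = S(η₁,0)`, `T₂ = S(0,η₂)`. -/
theorem laplace_transform_inverse_bivariate_subordinator
    {Ω : Type*} [MeasurableSpace Ω] (P : Measure Ω) [IsProbabilityMeasure P]
    (H1 H2 : ℝ → Ω → ℝ) (S : ℝ → ℝ → ℝ)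
    (hH1meas : Measurable (Function.uncurry H1))
    (hH2meas : Measurable (Function.uncurry H2))
    (hH1nonneg : ∀ x ω, 0 ≤ H1 x ω) (hH2nonneg : ∀ x ω, 0 ≤ H2 x ω)
    (hzero : ∀ᵐ ω ∂P, H1 0 ω = 0 ∧ H2 0 ω = 0)
    (hSnonneg : ∀ α β : ℝ, 0 ≤ α → 0 ≤ β → 0 ≤ S α β)
    (hindep : ∀ s t : ℝ, 0 ≤ s → s ≤ t →
      IndepFun (fun ω => (H1 t ω - H1 s ω, H2 t ω - H2 s ω))
        (fun ω => (H1 s ω, H2 s ω)) P)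
    (hincr : ∀ s t α β : ℝ, 0 ≤ s → s ≤ t → 0 ≤ α → 0 ≤ β →
      ∫ ω, Real.exp (-(α * (H1 t ω - H1 s ω)) - β * (H2 t ω - H2 s ω)) ∂P
        = Real.exp (-(t - s) * S α β))
    (hpath : ∀ᵐ ω ∂P,
      (∀ x y : ℝ, 0 ≤ x → x ≤ y → H1 x ω ≤ H1 y ω) ∧
      (∀ M : ℝ, ∃ x : ℝ, 0 ≤ x ∧ H1 x ω > M) ∧
      (∀ x y : ℝ, 0 ≤ x → x ≤ y → H2 x ω ≤ H2 y ω) ∧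
      (∀ M : ℝ, ∃ x : ℝ, 0 ≤ x ∧ H2 x ω > M))
    (L1 L2 : ℝ → Ω → ℝ)
    (hL1 : ∀ t ω, L1 t ω = sInf {x : ℝ | 0 ≤ x ∧ H1 x ω > t})
    (hL2 : ∀ t ω, L2 t ω = sInf {x : ℝ | 0 ≤ x ∧ H2 x ω > t})
    (ξ1 ξ2 η1 η2 : ℝ) (hξ1 : 0 < ξ1) (hξ2 : 0 < ξ2) (hη1 : 0 < η1) (hη2 : 0 < η2)
    (hT1 : 0 < S η1 0) (hT2 : 0 < S 0 η2) (hS : 0 < S η1 η2) :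
    ∫ t1 in Set.Ioi (0 : ℝ), ∫ t2 in Set.Ioi (0 : ℝ),
        Real.exp (-(η1 * t1) - η2 * t2) *
          (∫ ω, Real.exp (-(ξ1 * L1 t1 ω) - ξ2 * L2 t2 ω) ∂P)
      = S η1 0 * S 0 η2 / (η1 * η2 * (ξ1 + S η1 0) * (ξ2 + S 0 η2))
        + ξ1 * ξ2 * (S η1 0 + S 0 η2 - S η1 η2) /
            (η1 * η2 * (ξ1 + S η1 0) * (ξ2 + S 0 η2) * (ξ1 + ξ2 + S η1 η2)) := by
  have hm1 : ∀ x, Measurable (H1 x) := fun x => hH1meas.comp measurable_prodMk_left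
  have hm2 : ∀ x, Measurable (H2 x) := fun x => hH2meas.comp measurable_prodMk_left
  have J := fun {x y α β a b : ℝ} => joint P H1 H2 S hm1 hm2 hzero hindep hincr (x := x) (y := y)
    (α := α) (β := β) (a := a) (b := b)
  -- rewrite in terms of ff
  have hE : ∀ t1 t2, ∫ ω, Real.exp (-(ξ1 * L1 t1 ω) - ξ2 * L2 t2 ω) ∂P
      = ∫ ω, ff H1 ξ1 t1 ω * ff H2 ξ2 t2 ω ∂P := by
    intro t1 t2
    apply integral_congr_ae
    filter_upwards [hpath] with ω hω
    unfold ff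
    rw [← path_eq (fun x => H1 x ω) hω.1 hω.2.1 ξ1 hξ1 t1,
      ← path_eq (fun x => H2 x ω) hω.2.2.1 hω.2.2.2 ξ2 hξ2 t2, hL1, hL2, ← Real.exp_add]
    congr 1
  have step1 : ∀ t1 t2, Real.exp (-(η1 * t1) - η2 * t2) *
          (∫ ω, Real.exp (-(ξ1 * L1 t1 ω) - ξ2 * L2 t2 ω) ∂P)
      = Real.exp (-(η1 * t1)) * Real.exp (-(η2 * t2)) *
        ∫ ω, ff H1 ξ1 t1 ω * ff H2 ξ2 t2 ω ∂P := by
    intro t1 t2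
    rw [hE, ← Real.exp_add, sub_eq_add_neg]
  simp_rw [step1]
  rw [fub (intg_exp hη1 0) (intg_exp hη2 0) (ff_meas hH1meas ξ1) (ff_bd H1 hξ1)
    (ff_meas hH2meas ξ2) (ff_bd H2 hξ2)]
  simp_rw [ff_time hH1meas hH1nonneg hξ1 hη1, ff_time hH2meas hH2nonneg hξ2 hη2]
  have bd : ∀ {η h : ℝ}, 0 < η → 0 ≤ h → |1 - Real.exp (-(η * h))| ≤ 1 := by
    intro η h hη hh
    have h1 : Real.exp (-(η * h)) ≤ 1 := by
      rw [Real.exp_le_one_iff]; nlinarith [mul_nonneg hη.le hh]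
    rw [abs_le]; constructor <;> linarith [Real.exp_pos (-(η * h))]
  have gm : ∀ {H : ℝ → Ω → ℝ} (η : ℝ), Measurable (Function.uncurry H) →
      Measurable (Function.uncurry fun x ω => 1 - Real.exp (-(η * H x ω))) := by
    intro H η hH
    have : Measurable (fun p : ℝ × Ω => 1 - Real.exp (-(η * Function.uncurry H p))) := by fun_prop
    exact this
  rw [← fub ((intg_exp hξ1 0).const_mul _) ((intg_exp hξ2 0).const_mul _)
    (g1 := fun x ω => 1 - Real.exp (-(η1 * H1 x ω))) (g2 := fun x ω => 1 - Real.exp (-(η2 * H2 x ω)))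
    (gm η1 hH1meas)
    (fun x ω => bd hη1 (hH1nonneg x ω))
    (gm η2 hH2meas)
    (fun x ω => bd hη2 (hH2nonneg x ω))]
  have ie : ∀ {f : Ω → ℝ}, Measurable f → (∀ ω, 0 ≤ f ω) →
      Integrable (fun ω => Real.exp (-(f ω))) P := by
    intro f hf h0
    refine Integrable.of_bound (by fun_prop) 1 (Filter.Eventually.of_forall fun ω => ?_)
    rw [Real.norm_eq_abs, abs_of_pos (Real.exp_pos _), Real.exp_le_one_iff]
    linarith [h0 ω]
  have n1 : ∀ x ω, 0 ≤ η1 * H1 x ω := fun x ω => mul_nonneg hη1.le (hH1nonneg x ω)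
  have n2 : ∀ x ω, 0 ≤ η2 * H2 x ω := fun x ω => mul_nonneg hη2.le (hH2nonneg x ω)
  have hexp : ∀ x y, 0 ≤ x → 0 ≤ y →
      ∫ ω, (1 - Real.exp (-(η1 * H1 x ω))) * (1 - Real.exp (-(η2 * H2 y ω))) ∂P
      = 1 - Real.exp (-(x * S η1 0)) - Real.exp (-(y * S 0 η2)) +
        ∫ ω, Real.exp (-(η1 * H1 x ω + η2 * H2 y ω)) ∂P := by
    intro x y hx hy
    have a1 := ie ((hm1 x).const_mul η1) (n1 x)
    have a2 := ie ((hm2 y).const_mul η2) (n2 y)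
    have a3 : Integrable (fun ω => Real.exp (-(η1 * H1 x ω + η2 * H2 y ω))) P := ie (((hm1 x).const_mul η1).add ((hm2 y).const_mul η2))
      (fun ω => add_nonneg (n1 x ω) (n2 y ω))
    have a4 : Integrable (fun ω => 1 - Real.exp (-(η1 * H1 x ω))) P := (integrable_const 1).sub a1
    have a5 : Integrable (fun ω => 1 - Real.exp (-(η1 * H1 x ω)) - Real.exp (-(η2 * H2 y ω))) P :=
      a4.sub a2
    have v1 : ∫ ω, Real.exp (-(η1 * H1 x ω)) ∂P = Real.exp (-(x * S η1 0)) := by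
      have := J hx le_rfl hη1.le le_rfl le_rfl le_rfl (β := 0) (a := 0) (b := 0)
      simpa using this
    have v2 : ∫ ω, Real.exp (-(η2 * H2 y ω)) ∂P = Real.exp (-(y * S 0 η2)) := by
      have := J hy le_rfl le_rfl hη2.le le_rfl le_rfl (α := 0) (a := 0) (b := 0)
      simpa using this
    have e : ∀ ω, (1 - Real.exp (-(η1 * H1 x ω))) * (1 - Real.exp (-(η2 * H2 y ω)))
        = 1 - Real.exp (-(η1 * H1 x ω)) - Real.exp (-(η2 * H2 y ω))
          + Real.exp (-(η1 * H1 x ω + η2 * H2 y ω)) := by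
      intro ω; rw [neg_add, Real.exp_add]; ring
    simp_rw [e]
    rw [integral_add a5 a3, integral_sub a4 a2, integral_sub (integrable_const 1) a1, v1, v2]
    simp
  rw [final_int hξ1 hξ2 hT1 hT2 hS]
  · field_simp
    ring
  · intro x y hx hxy
    rw [hexp x y hx.le (hx.le.trans hxy),
      ← J hx.le hxy hη1.le hη2.le le_rfl hη2.le (a := 0)]
    congr 2; ext ω; rw [← Real.exp_add]; congr 1; ring
  · intro x y hy hyx
    rw [hexp x y (hy.le.trans hyx) hy.le,
      ← J hy.le hyx hη1.le hη2.le hη1.le le_rfl (b := 0)]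
    congr 2; ext ω; rw [← Real.exp_add]; congr 1; ring
end

section
/- For every α ∈ (0,1) and every ξ ∈ ℝ: ∫₀^∞ (e^{iξr} − 1) · α r^{−α−1} dr = −Γ(1−α) · (−iξ)^α, where the integral is an absolutely convergent Lebesgue integral of a complex-valued function, Γ is the Gamma function, and (−iξ)^α denotes the principal branch of the complex power (with 0^α = 0). -/
open Complex

open MeasureTheory Set Filter Topology

lemma aux_norm_exp_sub_one {z : ℂ} (hz : z.re ≤ 0) : ‖Complex.exp z - 1‖ ≤ ‖z‖ := by
  have h := Convex.norm_image_sub_le_of_norm_deriv_le (𝕜 := ℂ) (f := Complex.exp) (C := 1)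
    (s := {z : ℂ | z.re ≤ 0}) (x := 0) (y := z) (fun x _ => Complex.differentiableAt_exp)
    (fun x hx => by
      rw [Complex.deriv_exp, Complex.norm_exp]
      exact Real.exp_le_one_iff.mpr hx)
    (convex_halfSpace_re_le 0) (by simp) hz
  simpa using h

lemma aux_bound_s13 (α : ℝ) (hα0 : 0 < α) {w : ℂ} (hw : 0 ≤ w.re) {K : ℝ} (hK : ‖w‖ ≤ K)
    {r : ℝ} (hr : 0 < r) :
    ‖(Complex.exp (-w * r) - 1) * ((α * r ^ (-α - 1) : ℝ) : ℂ)‖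
      ≤ min 2 (K * r) * (α * r ^ (-α - 1)) := by
  have hre : (-w * r).re ≤ 0 := by
    simp
    positivity
  have hp : 0 ≤ α * r ^ (-α - 1) := by positivity
  rw [norm_mul, Complex.norm_real, Real.norm_of_nonneg hp]
  refine mul_le_mul_of_nonneg_right (le_min ?_ ?_) hp
  · calc _ ≤ ‖Complex.exp (-w * r)‖ + ‖(1 : ℂ)‖ := norm_sub_le _ _
      _ ≤ 1 + 1 := by
        gcongr
        · rw [Complex.norm_exp]
          exact Real.exp_le_one_iff.mpr hre
        · simp
      _ = 2 := by norm_num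
  · refine (aux_norm_exp_sub_one hre).trans ?_
    rw [norm_mul, norm_neg, Complex.norm_real, Real.norm_of_nonneg hr.le]
    gcongr

lemma aux_bound_int (α : ℝ) (hα0 : 0 < α) (hα1 : α < 1) (K : ℝ) (hK : 0 ≤ K) :
    IntegrableOn (fun r : ℝ => min 2 (K * r) * (α * r ^ (-α - 1))) (Ioi 0) := by
  have hmeas : Measurable (fun r : ℝ => min 2 (K * r) * (α * r ^ (-α - 1))) := by fun_prop
  rw [← Ioc_union_Ioi_eq_Ioi (zero_le_one (α := ℝ)), integrableOn_union]
  constructor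
  · have h : IntegrableOn (fun r : ℝ => K * α * r ^ (-α)) (Ioc 0 1) := by
      have := (intervalIntegral.intervalIntegrable_rpow' (a := 0) (b := 1)
        (r := -α) (by linarith))
      rw [intervalIntegrable_iff_integrableOn_Ioc_of_le zero_le_one] at this
      exact this.const_mul _
    refine Integrable.mono' h hmeas.aestronglyMeasurable ?_
    filter_upwards [ae_restrict_mem measurableSet_Ioc] with r hr
    have hr0 : 0 < r := hr.1
    have hp : 0 ≤ α * r ^ (-α - 1) := by positivity
    rw [Real.norm_of_nonneg (by positivity)]
    calc _ ≤ K * r * (α * r ^ (-α - 1)) := by gcongr; exact min_le_right _ _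
      _ = K * α * r ^ (-α) := by
        rw [Real.rpow_sub_one hr0.ne']
        field_simp
  · have h : IntegrableOn (fun r : ℝ => 2 * (α * r ^ (-α - 1))) (Ioi 1) :=
      ((integrableOn_Ioi_rpow_of_lt (by linarith) zero_lt_one).const_mul _).const_mul _
    refine Integrable.mono' h hmeas.aestronglyMeasurable ?_
    filter_upwards [ae_restrict_mem measurableSet_Ioi] with r hr
    have hr0 : 0 < r := zero_lt_one.trans hr
    rw [Real.norm_of_nonneg (by positivity)]
    gcongr
    exact min_le_left _ _

lemma aux_meas_s13 (α : ℝ) (w : ℂ) : Measurable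
    (fun r : ℝ => (Complex.exp (-w * r) - 1) * ((α * r ^ (-α - 1) : ℝ) : ℂ)) := by
  fun_prop

lemma aux_int_s13 (α : ℝ) (hα0 : 0 < α) (hα1 : α < 1) {w : ℂ} (hw : 0 ≤ w.re) :
    IntegrableOn (fun r : ℝ => (Complex.exp (-w * r) - 1) * ((α * r ^ (-α - 1) : ℝ) : ℂ))
      (Ioi 0) := by
  refine Integrable.mono' (aux_bound_int α hα0 hα1 ‖w‖ (norm_nonneg _))
    (aux_meas_s13 α w).aestronglyMeasurable ?_
  filter_upwards [ae_restrict_mem measurableSet_Ioi] with r hr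
  exact aux_bound_s13 α hα0 hw le_rfl hr

lemma aux_real (α : ℝ) (hα0 : 0 < α) (hα1 : α < 1) {b : ℝ} (hb : 0 < b) :
    ∫ r in Ioi (0 : ℝ), (Real.exp (-b * r) - 1) * (α * r ^ (-α - 1))
      = -Real.Gamma (1 - α) * b ^ α := by
  have hint : IntegrableOn (fun r : ℝ => (Real.exp (-b * r) - 1) * (α * r ^ (-α - 1)))
      (Ioi 0) := by
    have := (aux_int_s13 α hα0 hα1 (w := b) (by simpa using hb.le)).re
    refine this.congr (Eventually.of_forall fun r => ?_)
    have : (Complex.exp (-b * r) - 1) * ((α * r ^ (-α - 1) : ℝ) : ℂ)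
      = (((Real.exp (-b * r) - 1) * (α * r ^ (-α - 1)) : ℝ) : ℂ) := by push_cast; rfl
    simp only [this]
    exact Complex.ofReal_re _
  have hG : IntegrableOn (fun r : ℝ => r ^ (-α) * Real.exp (-b * r)) (Ioi 0) := by
    simpa using integrableOn_rpow_mul_exp_neg_mul_rpow (p := 1) (s := -α) (b := b)
      (by linarith) one_pos hb
  have hGv : ∫ r in Ioi (0 : ℝ), r ^ (-α) * Real.exp (-b * r)
      = b ^ (α - 1) * Real.Gamma (1 - α) := by
    have := integral_rpow_mul_exp_neg_mul_rpow (p := 1) (q := -α) (b := b)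
      one_pos (by linarith) hb
    simp only [Real.rpow_one, div_one, mul_one] at this
    rw [this]
    congr 2 <;> ring_nf
  have hbd : ∀ r : ℝ, 0 < r → ‖(Real.exp (-b * r) - 1) * (-r ^ (-α))‖ ≤ b * r ^ (1 - α) ∧
      ‖(Real.exp (-b * r) - 1) * (-r ^ (-α))‖ ≤ r ^ (-α) := by
    intro r hr
    have hp : 0 ≤ r ^ (-α) := by positivity
    have h1 : Real.exp (-b * r) ≤ 1 := Real.exp_le_one_iff.mpr (by nlinarith)
    have h2 : 0 < Real.exp (-b * r) := Real.exp_pos _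
    have h3 : -b * r + 1 ≤ Real.exp (-b * r) := Real.add_one_le_exp _
    rw [norm_mul, norm_neg, Real.norm_of_nonneg hp, Real.norm_of_nonpos (by linarith)]
    constructor
    · rw [show (1 - α) = -α + 1 by ring, Real.rpow_add_one hr.ne']
      nlinarith
    · nlinarith
  have h := integral_Ioi_mul_deriv_eq_deriv_mul (a := (0 : ℝ)) (a' := (0 : ℝ)) (b' := (0 : ℝ))
    (u := fun r : ℝ => Real.exp (-b * r) - 1) (v := fun r : ℝ => -r ^ (-α))
    (u' := fun r : ℝ => -b * Real.exp (-b * r)) (v' := fun r : ℝ => α * r ^ (-α - 1))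
    (fun x _ => by
      have := (((hasDerivAt_id x).const_mul (-b)).exp).sub_const 1
      simpa [mul_comm] using this)
    (fun x hx => by
      have := (Real.hasDerivAt_rpow_const (x := x) (p := -α) (Or.inl (ne_of_gt hx))).fun_neg
      simpa using this)
    hint
    (by
      refine (hG.const_mul b).congr (Eventually.of_forall fun r => ?_)
      simp only [Pi.mul_apply]; ring)
    (by
      refine squeeze_zero_norm' (a := fun r : ℝ => b * r ^ (1 - α)) ?_ ?_
      · filter_upwards [self_mem_nhdsWithin] with r hr using (hbd r hr).1
      · have : Tendsto (fun r : ℝ => b * r ^ (1 - α)) (𝓝 0) (𝓝 (b * 0 ^ (1 - α))) :=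
          ((Real.continuousAt_rpow_const 0 (1 - α) (Or.inr (by linarith))).tendsto).const_mul b
        rw [Real.zero_rpow (by linarith), mul_zero] at this
        exact this.mono_left nhdsWithin_le_nhds)
    (by
      refine squeeze_zero_norm' (a := fun r : ℝ => r ^ (-α)) ?_ (tendsto_rpow_neg_atTop hα0)
      filter_upwards [eventually_gt_atTop 0] with r hr using (hbd r hr).2)
  rw [h]
  have : ∫ r in Ioi (0 : ℝ), -b * Real.exp (-b * r) * (-r ^ (-α))
      = b * ∫ r in Ioi (0 : ℝ), r ^ (-α) * Real.exp (-b * r) := by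
    rw [← integral_const_mul]
    congr 1; ext r; ring
  rw [this, hGv, Real.rpow_sub_one hb.ne']
  field_simp
  ring

lemma aux_diff (α : ℝ) (hα0 : 0 < α) (hα1 : α < 1) {w : ℂ} (hw : 0 < w.re) :
    DifferentiableAt ℂ (fun w : ℂ => ∫ r in Ioi (0 : ℝ),
      (Complex.exp (-w * r) - 1) * ((α * r ^ (-α - 1) : ℝ) : ℂ)) w := by
  have hb : 0 < w.re / 2 := by linarith
  have hG : IntegrableOn (fun r : ℝ => α * (r ^ (-α) * Real.exp (-(w.re / 2) * r))) (Ioi 0) := by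
    have := integrableOn_rpow_mul_exp_neg_mul_rpow (p := 1) (s := -α) (b := w.re / 2)
      (by linarith) one_pos hb
    simp only [Real.rpow_one] at this
    exact this.const_mul α
  have hs : {z : ℂ | w.re / 2 < z.re} ∈ 𝓝 w :=
    (isOpen_lt continuous_const Complex.continuous_re).mem_nhds (by simp; linarith)
  refine (hasDerivAt_integral_of_dominated_loc_of_deriv_le (μ := volume.restrict (Ioi (0:ℝ)))
    (F := fun (w : ℂ) (r : ℝ) => (Complex.exp (-w * r) - 1) * ((α * r ^ (-α - 1) : ℝ) : ℂ))
    (F' := fun (w : ℂ) (r : ℝ) =>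
      (Complex.exp (-w * r) * (-r)) * ((α * r ^ (-α - 1) : ℝ) : ℂ)) hs
    (Eventually.of_forall fun z => (aux_meas_s13 α z).aestronglyMeasurable)
    (aux_int_s13 α hα0 hα1 hw.le) (Measurable.aestronglyMeasurable (by fun_prop))
    ?_ hG ?_).2.differentiableAt
  · filter_upwards [ae_restrict_mem measurableSet_Ioi] with r hr z hz
    have hr0 : 0 < r := hr
    have hp : 0 ≤ α * r ^ (-α - 1) := by positivity
    rw [norm_mul, norm_mul, norm_neg, Complex.norm_real, Complex.norm_real,
      Real.norm_of_nonneg hp, Real.norm_of_nonneg hr0.le, Complex.norm_exp]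
    have h1 : Real.exp ((-z * r).re) ≤ Real.exp (-(w.re / 2) * r) := by
      apply Real.exp_le_exp.mpr
      have hz : w.re / 2 < z.re := hz
      simp
      nlinarith
    calc _ ≤ Real.exp (-(w.re / 2) * r) * r * (α * r ^ (-α - 1)) := by gcongr
      _ = _ := by
        rw [Real.rpow_sub_one hr0.ne']
        field_simp
  · refine Eventually.of_forall fun r z _ => ?_
    have h1 : HasDerivAt (fun z : ℂ => -z * r) (-(r:ℂ)) z := by
      simpa using ((hasDerivAt_id z).neg).mul_const (r : ℂ)
    exact (h1.cexp.sub_const 1).mul_const _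

lemma aux_half (α : ℝ) (hα0 : 0 < α) (hα1 : α < 1) {w : ℂ} (hw : 0 < w.re) :
    ∫ r in Ioi (0 : ℝ), (Complex.exp (-w * r) - 1) * ((α * r ^ (-α - 1) : ℝ) : ℂ)
      = -(Real.Gamma (1 - α) : ℂ) * w ^ (α : ℂ) := by
  have ho : IsOpen {z : ℂ | 0 < z.re} := isOpen_lt continuous_const Complex.continuous_re
  refine AnalyticOnNhd.eqOn_of_preconnected_of_frequently_eq (𝕜 := ℂ) (z₀ := 1)
    (U := {z : ℂ | 0 < z.re})
    (f := fun w : ℂ => ∫ r in Ioi (0 : ℝ),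
      (Complex.exp (-w * r) - 1) * ((α * r ^ (-α - 1) : ℝ) : ℂ))
    (g := fun w : ℂ => -(Real.Gamma (1 - α) : ℂ) * w ^ (α : ℂ))
    (DifferentiableOn.analyticOnNhd
      (fun z hz => (aux_diff α hα0 hα1 hz).differentiableWithinAt) ho)
    (DifferentiableOn.analyticOnNhd (fun z hz => ?_) ho)
    (convex_halfSpace_re_gt 0).isPreconnected (by simp) ?_ hw
  · have : DifferentiableAt ℂ (fun z : ℂ => z ^ (α : ℂ)) z :=
      differentiableAt_id.cpow_const (Or.inl hz)
    exact (this.const_mul _).differentiableWithinAt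
  · have ht : Tendsto (fun x : ℝ => (x : ℂ)) (𝓝[>] 1) (𝓝[≠] 1) := by
      refine tendsto_nhdsWithin_iff.mpr ⟨?_, ?_⟩
      · exact (Complex.continuous_ofReal.tendsto' 1 1 (by simp)).mono_left nhdsWithin_le_nhds
      · filter_upwards [self_mem_nhdsWithin] with x hx
        have : x ≠ 1 := ne_of_gt hx
        simpa using this
    refine ht.frequently (Eventually.frequently ?_)
    filter_upwards [self_mem_nhdsWithin] with b hb
    have hb0 : 0 < b := zero_lt_one.trans hb
    have h := congrArg (fun x : ℝ => (x : ℂ)) (aux_real α hα0 hα1 hb0)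
    simp only [← integral_complex_ofReal] at h
    rw [Complex.ofReal_mul, Complex.ofReal_cpow hb0.le, Complex.ofReal_neg] at h
    rw [← h]
    congr 1; ext r
    push_cast
    rfl

/-- For `α ∈ (0,1)` and `ξ ∈ ℝ`:
`∫₀^∞ (e^{iξr} − 1) α r^{−α−1} dr = −Γ(1−α)(−iξ)^α`, where `(−iξ)^α` is the
principal branch of the complex power (with `0^α = 0`). -/
theorem stable_levy_integral_complex
    (α ξ : ℝ) (hα0 : 0 < α) (hα1 : α < 1) :
    ∫ r in Set.Ioi (0 : ℝ),
        (Complex.exp (Complex.I * ξ * r) - 1) * ((α * r ^ (-α - 1) : ℝ) : ℂ)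
      = -(Real.Gamma (1 - α) : ℂ) * (-(Complex.I * ξ)) ^ (α : ℂ) := by

  rcases eq_or_ne ξ 0 with rfl | hξ
  · have : (α : ℂ) ≠ 0 := by exact_mod_cast hα0.ne'
    simp [this]
  have hlim1 : Filter.Tendsto (fun ε : ℝ => ∫ r in Set.Ioi (0 : ℝ),
      (Complex.exp (-((ε : ℂ) - Complex.I * ξ) * r) - 1) * ((α * r ^ (-α - 1) : ℝ) : ℂ))
      (nhdsWithin 0 (Set.Ioi 0)) (nhds (∫ r in Set.Ioi (0 : ℝ),
        (Complex.exp (Complex.I * ξ * r) - 1) * ((α * r ^ (-α - 1) : ℝ) : ℂ))) := by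
    refine MeasureTheory.tendsto_integral_filter_of_dominated_convergence
      (fun r : ℝ => min 2 ((1 + |ξ|) * r) * (α * r ^ (-α - 1)))
      (Filter.Eventually.of_forall fun ε => (aux_meas_s13 α _).aestronglyMeasurable) ?_
      (aux_bound_int α hα0 hα1 _ (by positivity)) ?_
    · filter_upwards [Ioo_mem_nhdsGT (zero_lt_one (α := ℝ))] with ε hε
      filter_upwards [MeasureTheory.ae_restrict_mem measurableSet_Ioi] with r hr
      refine aux_bound_s13 α hα0 (by simpa using hε.1.le) ?_ hr
      refine (norm_sub_le _ _).trans ?_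
      rw [norm_mul, Complex.norm_I, Complex.norm_real, Complex.norm_real, one_mul,
        Real.norm_of_nonneg hε.1.le, Real.norm_eq_abs]
      linarith [hε.2]
    · refine Filter.Eventually.of_forall fun r => ?_
      refine Filter.Tendsto.mono_left ?_ nhdsWithin_le_nhds
      refine Continuous.tendsto' (by fun_prop) _ _ ?_
      simp
  have hlim2 : Filter.Tendsto (fun ε : ℝ =>
      -(Real.Gamma (1 - α) : ℂ) * ((ε : ℂ) - Complex.I * ξ) ^ (α : ℂ))
      (nhdsWithin 0 (Set.Ioi 0))
      (nhds (-(Real.Gamma (1 - α) : ℂ) * (-(Complex.I * ξ)) ^ (α : ℂ))) := by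
    refine Filter.Tendsto.mono_left ?_ nhdsWithin_le_nhds
    refine Filter.Tendsto.const_mul _ ?_
    have h1 : Filter.Tendsto (fun ε : ℝ => (ε : ℂ) - Complex.I * ξ) (nhds 0)
        (nhds (-(Complex.I * ξ))) :=
      Continuous.tendsto' (by fun_prop) _ _ (by simp)
    have h2 : ContinuousAt (fun z : ℂ => z ^ (α : ℂ)) (-(Complex.I * ξ)) :=
      continuousAt_cpow_const (Or.inr (by simpa using hξ))
    exact h2.tendsto.comp h1
  refine tendsto_nhds_unique hlim1 (hlim2.congr' ?_)
  filter_upwards [self_mem_nhdsWithin] with ε hε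
  exact (aux_half α hα0 hα1 (by simpa using hε)).symm
end

section
/- Let W₁, W₂ be random variables such that W₁ is exponentially distributed with rate ξ₁ > 0, W₂ is exponentially distributed with rate ξ₂ > 0, and W₁, W₂ and the pair of processes (H₁, H₂) are mutually independent. Then for all t₁, t₂ ≥ 0: P(H₁(W₁) > t₁, H₂(W₂) > t₂) = E[exp(−ξ₁ L₁(t₁) − ξ₂ L₂(t₂))]. -/
open MeasureTheory ProbabilityTheory

/-- A version of the inverse, measurable for the sigma-algebra of the process. -/
noncomputable def invAux {Ω : Type*} (H : ℝ → Ω → ℝ) (t : ℝ) (ω : Ω) : ℝ :=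
  (⨅ q : ℚ, if 0 ≤ (q : ℝ) ∧ H q ω > t then ENNReal.ofReal q else ⊤).toReal

lemma invAux_nonneg {Ω : Type*} (H : ℝ → Ω → ℝ) (t : ℝ) (ω : Ω) : 0 ≤ invAux H t ω :=
  ENNReal.toReal_nonneg

lemma invAux_measurable {Ω : Type*} {m : MeasurableSpace Ω} (H : ℝ → Ω → ℝ)
    (hH : ∀ x, Measurable (H x)) (t : ℝ) : Measurable (invAux H t) := by
  unfold invAux
  refine ENNReal.measurable_toReal.comp (Measurable.iInf fun q => ?_)
  refine Measurable.ite ?_ measurable_const measurable_const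
  exact (MeasurableSet.const _).inter (measurableSet_lt measurable_const (hH _))

lemma invAux_eq {Ω : Type*} (H : ℝ → Ω → ℝ) (t : ℝ) (ω : Ω)
    (hm : ∀ x y : ℝ, 0 ≤ x → x ≤ y → H x ω ≤ H y ω)
    (hu : ∀ M : ℝ, ∃ x : ℝ, 0 ≤ x ∧ H x ω > M) :
    sInf {x : ℝ | 0 ≤ x ∧ H x ω > t} = invAux H t ω := by
  have hbdd : BddBelow {x : ℝ | 0 ≤ x ∧ H x ω > t} := ⟨0, fun x hx => hx.1⟩
  have h0 : 0 ≤ sInf {x : ℝ | 0 ≤ x ∧ H x ω > t} := Real.sInf_nonneg fun x hx => hx.1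
  have key : (⨅ q : ℚ, if 0 ≤ (q : ℝ) ∧ H q ω > t then ENNReal.ofReal q else ⊤)
      = ENNReal.ofReal (sInf {x : ℝ | 0 ≤ x ∧ H x ω > t}) := by
    apply le_antisymm
    · refine le_of_forall_gt fun c hc => ?_
      obtain ⟨r, hr0, hr1, hr2⟩ := ENNReal.lt_iff_exists_real_btwn.1 hc
      have hlr : sInf {x : ℝ | 0 ≤ x ∧ H x ω > t} < r := by
        by_contra hcon
        exact absurd (ENNReal.ofReal_le_ofReal (not_lt.1 hcon)) (not_le.2 hr1)
      obtain ⟨x, hx, hxr⟩ := exists_lt_of_csInf_lt (hu t) hlr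
      obtain ⟨q, hq1, hq2⟩ := exists_rat_btwn hxr
      refine lt_of_le_of_lt (iInf_le _ q) (lt_of_le_of_lt ?_ hr2)
      rw [if_pos ⟨hx.1.trans hq1.le, lt_of_lt_of_le hx.2 (hm _ _ hx.1 hq1.le)⟩]
      exact ENNReal.ofReal_le_ofReal hq2.le
    · refine le_iInf fun q => ?_
      split_ifs with h
      · exact ENNReal.ofReal_le_ofReal (csInf_le hbdd h)
      · exact le_top
  rw [invAux, key, ENNReal.toReal_ofReal h0]

lemma map_eq_expMeasure {Ω : Type*} [MeasurableSpace Ω] (P : Measure Ω) [IsProbabilityMeasure P]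
    (W : Ω → ℝ) (hW : Measurable W) (ξ : ℝ) (hξ : 0 < ξ)
    (h : ∀ s : ℝ, 0 ≤ s → (P {ω | W ω > s}).toReal = Real.exp (-(ξ * s))) :
    P.map W = expMeasure ξ := by
  have := isProbabilityMeasure_expMeasure hξ
  have : IsProbabilityMeasure (P.map W) := Measure.isProbabilityMeasure_map hW.aemeasurable
  apply Measure.eq_of_cdf
  ext x
  rw [cdf_expMeasure_eq hξ, cdf_eq_real]
  have hIic : ∀ s : ℝ, 0 ≤ s → (P.map W).real (Set.Iic s) = 1 - Real.exp (-(ξ * s)) := by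
    intro s hs
    have h1 := probReal_compl_eq_one_sub (μ := P.map W) (measurableSet_Ioi (a := s))
    rw [Set.compl_Ioi] at h1
    rw [h1, ← h s hs, measureReal_def, Measure.map_apply hW measurableSet_Ioi]
    rfl
  split_ifs with hx
  · exact hIic x hx
  · apply le_antisymm _ measureReal_nonneg
    have := hIic 0 le_rfl
    simp at this
    rw [← this]
    exact measureReal_mono (Set.Iic_subset_Iic.2 (not_le.1 hx).le)

lemma map_singleton_zero {Ω : Type*} [MeasurableSpace Ω] (P : Measure Ω) [IsProbabilityMeasure P]
    (W : Ω → ℝ) (hW : Measurable W) (ξ : ℝ) (hξ : 0 < ξ)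
    (h : ∀ s : ℝ, 0 ≤ s → (P {ω | W ω > s}).toReal = Real.exp (-(ξ * s))) (l : ℝ) :
    P.map W {l} = 0 := by
  rw [map_eq_expMeasure P W hW ξ hξ h]
  exact withDensity_absolutelyContinuous _ _ (measure_singleton l)

lemma ae_ne_of_indep {Ω : Type*} [MeasurableSpace Ω] (P : Measure Ω) [IsProbabilityMeasure P]
    (W L : Ω → ℝ) (hW : Measurable W) (hL : Measurable L)
    (h0 : ∀ l, P.map W {l} = 0) (hi : IndepFun W L P) : ∀ᵐ ω ∂P, W ω ≠ L ω := by
  have hm : MeasurableSet {p : ℝ × ℝ | p.1 = p.2} := measurableSet_eq_fun measurable_fst measurable_snd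
  have h1 : P.map (fun ω => (W ω, L ω)) {p : ℝ × ℝ | p.1 = p.2} = 0 := by
    rw [hi.map_prod_eq_prod_map_map hW.aemeasurable hL.aemeasurable,
      Measure.prod_apply_symm hm]
    have : ∀ y : ℝ, P.map W ((fun x => (x, y)) ⁻¹' {p : ℝ × ℝ | p.1 = p.2}) = 0 := by
      intro y
      have he : (fun x => (x, y)) ⁻¹' {p : ℝ × ℝ | p.1 = p.2} = {y} := by
        ext x; simp
      rw [he, h0]
    simp only [this, lintegral_zero]
  rw [Measure.map_apply (hW.prodMk hL) hm] at h1
  rw [ae_iff]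
  convert h1 using 2
  ext ω; simp

lemma lt_iff_aux {Ω : Type*} (H : ℝ → Ω → ℝ) (t : ℝ) (ω : Ω) (w : ℝ)
    (hm : ∀ x y : ℝ, 0 ≤ x → x ≤ y → H x ω ≤ H y ω)
    (hu : ∀ M : ℝ, ∃ x : ℝ, 0 ≤ x ∧ H x ω > M) (hw : 0 ≤ w) (hne : w ≠ invAux H t ω) :
    H w ω > t ↔ invAux H t ω < w := by
  rw [← invAux_eq H t ω hm hu] at hne ⊢
  constructor
  · intro h
    exact lt_of_le_of_ne (csInf_le ⟨0, fun x hx => hx.1⟩ ⟨hw, h⟩) hne.symm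
  · intro h
    obtain ⟨x, hx, hxw⟩ := exists_lt_of_csInf_lt (hu t) h
    exact lt_of_lt_of_le hx.2 (hm _ _ hx.1 hxw.le)

lemma ae_nonneg_aux {Ω : Type*} [MeasurableSpace Ω] (P : Measure Ω) [IsProbabilityMeasure P]
    (W : Ω → ℝ) (hW : Measurable W) (ξ : ℝ)
    (h : ∀ s : ℝ, 0 ≤ s → (P {ω | W ω > s}).toReal = Real.exp (-(ξ * s))) :
    ∀ᵐ ω ∂P, 0 ≤ W ω := by
  have h1 := h 0 le_rfl
  simp only [mul_zero, neg_zero, Real.exp_zero] at h1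
  have h2 : P {ω | W ω > 0} = 1 := by
    rw [← ENNReal.toReal_eq_one_iff]; exact h1
  have h3 := (mem_ae_iff_prob_eq_one (measurableSet_lt measurable_const hW)).2 h2
  filter_upwards [h3] with ω hω using le_of_lt hω

lemma indep_aux {Ω : Type*} {G : MeasurableSpace Ω} {mΩ : MeasurableSpace Ω} (P : Measure Ω)
    [IsProbabilityMeasure P] (W1 W2 M1 M2 : Ω → ℝ) (hW1meas : Measurable W1)
    (hW2meas : Measurable W2) (hG1 : Measurable[G] M1) (hG2 : Measurable[G] M2) (hGle : G ≤ mΩ)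
    (hindep : iIndep
      ![MeasurableSpace.comap W1 inferInstance, MeasurableSpace.comap W2 inferInstance, G] P) :
    IndepFun W1 M1 P ∧ IndepFun W2 M2 P ∧
      IndepFun (fun ω => (W1 ω, W2 ω)) (fun ω => (M1 ω, M2 ω)) P := by
  have hWL1 : IndepFun W1 M1 P :=
    indep_of_indep_of_le_right (hindep.indep (i := 0) (j := 2) (by decide)) hG1.comap_le
  have hWL2 : IndepFun W2 M2 P :=
    indep_of_indep_of_le_right (hindep.indep (i := 1) (j := 2) (by decide)) hG2.comap_le
  refine ⟨hWL1, hWL2, ?_⟩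
  have h := indep_iSup_of_disjoint (S := {0, 1}) (T := {2}) (m := ![MeasurableSpace.comap W1 inferInstance,
      MeasurableSpace.comap W2 inferInstance, G]) (by
      intro i
      fin_cases i
      · exact hW1meas.comap_le
      · exact hW2meas.comap_le
      · exact hGle) hindep (by simp)
  refine indep_of_indep_of_le h ?_ ?_
  · apply Measurable.comap_le
    refine Measurable.prodMk ?_ ?_
    · exact Measurable.mono (comap_measurable W1)
        (le_iSup₂_of_le (0 : Fin 3) (by simp) le_rfl) le_rfl
    · exact Measurable.mono (comap_measurable W2)
        (le_iSup₂_of_le (1 : Fin 3) (by simp) le_rfl) le_rfl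
  · apply Measurable.comap_le
    exact Measurable.mono (hG1.prodMk hG2)
        (le_iSup₂_of_le (2 : Fin 3) (by simp) le_rfl) le_rfl

lemma measurable_pair_aux {Ω : Type*} (H1 H2 : ℝ → Ω → ℝ) (t1 t2 : ℝ) :
    Measurable[⨆ x : ℝ, MeasurableSpace.comap (fun ω => (H1 x ω, H2 x ω)) inferInstance]
      (invAux H1 t1) ∧
    Measurable[⨆ x : ℝ, MeasurableSpace.comap (fun ω => (H1 x ω, H2 x ω)) inferInstance]
      (invAux H2 t2) := by
  let G : MeasurableSpace Ω :=
    ⨆ x : ℝ, MeasurableSpace.comap (fun ω => (H1 x ω, H2 x ω)) inferInstance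
  have hpair : ∀ x, Measurable[G] (fun ω => (H1 x ω, H2 x ω)) := fun x =>
    Measurable.mono (comap_measurable _)
      (le_iSup (fun x : ℝ => MeasurableSpace.comap (fun ω => (H1 x ω, H2 x ω)) inferInstance) x)
      le_rfl
  exact ⟨invAux_measurable (m := G) H1 (fun x => measurable_fst.comp (hpair x)) t1,
    invAux_measurable (m := G) H2 (fun x => measurable_snd.comp (hpair x)) t2⟩

/-- If `W₁, W₂` are exponential with rates `ξ₁, ξ₂` and
`W₁`, `W₂` and the pair of processes `(H₁,H₂)` are mutually independent, then
`P(H₁(W₁) > t₁, H₂(W₂) > t₂) = E[exp(−ξ₁L₁(t₁) − ξ₂L₂(t₂))]`. -/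
theorem subordinated_exponential_times_joint_survival
    {Ω : Type*} [MeasurableSpace Ω] (P : Measure Ω) [IsProbabilityMeasure P]
    (H1 H2 : ℝ → Ω → ℝ)
    (hH1meas : Measurable (Function.uncurry H1))
    (hH2meas : Measurable (Function.uncurry H2))
    (hpath : ∀ᵐ ω ∂P,
      (∀ x y : ℝ, 0 ≤ x → x ≤ y → H1 x ω ≤ H1 y ω) ∧
      (∀ M : ℝ, ∃ x : ℝ, 0 ≤ x ∧ H1 x ω > M) ∧
      (∀ x y : ℝ, 0 ≤ x → x ≤ y → H2 x ω ≤ H2 y ω) ∧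
      (∀ M : ℝ, ∃ x : ℝ, 0 ≤ x ∧ H2 x ω > M))
    (L1 L2 : ℝ → Ω → ℝ)
    (hL1 : ∀ t ω, L1 t ω = sInf {x : ℝ | 0 ≤ x ∧ H1 x ω > t})
    (hL2 : ∀ t ω, L2 t ω = sInf {x : ℝ | 0 ≤ x ∧ H2 x ω > t})
    (W1 W2 : Ω → ℝ) (hW1meas : Measurable W1) (hW2meas : Measurable W2)
    (ξ1 ξ2 : ℝ) (hξ1 : 0 < ξ1) (hξ2 : 0 < ξ2)
    (hW1exp : ∀ s : ℝ, 0 ≤ s → (P {ω | W1 ω > s}).toReal = Real.exp (-(ξ1 * s)))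
    (hW2exp : ∀ s : ℝ, 0 ≤ s → (P {ω | W2 ω > s}).toReal = Real.exp (-(ξ2 * s)))
    (hindep : iIndep
      ![MeasurableSpace.comap W1 inferInstance,
        MeasurableSpace.comap W2 inferInstance,
        ⨆ x : ℝ, MeasurableSpace.comap (fun ω => (H1 x ω, H2 x ω)) inferInstance]
      P)
    (t1 t2 : ℝ) (ht1 : 0 ≤ t1) (ht2 : 0 ≤ t2) :
    (P {ω | H1 (W1 ω) ω > t1 ∧ H2 (W2 ω) ω > t2}).toReal
      = ∫ ω, Real.exp (-(ξ1 * L1 t1 ω) - ξ2 * L2 t2 ω) ∂P := by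
  have hH1x : ∀ x, Measurable (H1 x) := fun x => hH1meas.comp measurable_prodMk_left
  have hH2x : ∀ x, Measurable (H2 x) := fun x => hH2meas.comp measurable_prodMk_left
  have hM1 := invAux_measurable H1 hH1x t1
  have hM2 := invAux_measurable H2 hH2x t2
  have hW12 : IndepFun W1 W2 P := hindep.indep (i := 0) (j := 1) (by decide)
  obtain ⟨hWL1, hWL2, hWL⟩ := indep_aux P W1 W2 _ _ hW1meas hW2meas
    (measurable_pair_aux H1 H2 t1 t2).1 (measurable_pair_aux H1 H2 t1 t2).2
    (iSup_le fun x => ((hH1x x).prodMk (hH2x x)).comap_le) hindep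
  have hne1 := ae_ne_of_indep P W1 _ hW1meas hM1 (map_singleton_zero P W1 hW1meas ξ1 hξ1 hW1exp) hWL1
  have hne2 := ae_ne_of_indep P W2 _ hW2meas hM2 (map_singleton_zero P W2 hW2meas ξ2 hξ2 hW2exp) hWL2
  have hn1 := ae_nonneg_aux P W1 hW1meas ξ1 hW1exp
  have hn2 := ae_nonneg_aux P W2 hW2meas ξ2 hW2exp
  have hset : P {ω | H1 (W1 ω) ω > t1 ∧ H2 (W2 ω) ω > t2}
      = P {ω | invAux H1 t1 ω < W1 ω ∧ invAux H2 t2 ω < W2 ω} := by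
    apply measure_congr
    filter_upwards [hpath, hne1, hne2, hn1, hn2] with ω hp h1 h2 h3 h4
    exact propext (and_congr (lt_iff_aux H1 t1 ω _ hp.1 hp.2.1 h3 h1)
      (lt_iff_aux H2 t2 ω _ hp.2.2.1 hp.2.2.2 h4 h2))
  have hint : ∫ ω, Real.exp (-(ξ1 * L1 t1 ω) - ξ2 * L2 t2 ω) ∂P
      = ∫ ω, Real.exp (-(ξ1 * invAux H1 t1 ω) - ξ2 * invAux H2 t2 ω) ∂P := by
    apply integral_congr_ae
    filter_upwards [hpath] with ω hp
    simp only [hL1, hL2]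
    rw [invAux_eq H1 t1 ω hp.1 hp.2.1, invAux_eq H2 t2 ω hp.2.2.1 hp.2.2.2]
  have htail : ∀ (W : Ω → ℝ) (ξ : ℝ), Measurable W →
      (∀ s : ℝ, 0 ≤ s → (P {ω | W ω > s}).toReal = Real.exp (-(ξ * s))) →
      ∀ s, 0 ≤ s → P.map W (Set.Ioi s) = ENNReal.ofReal (Real.exp (-(ξ * s))) := by
    intro W ξ hW h s hs
    rw [← h s hs, ENNReal.ofReal_toReal (measure_ne_top _ _), Measure.map_apply hW measurableSet_Ioi]
    rfl
  have hSm : MeasurableSet {p : (ℝ × ℝ) × (ℝ × ℝ) | p.2.1 < p.1.1 ∧ p.2.2 < p.1.2} :=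
    MeasurableSet.inter
      (measurableSet_lt (measurable_fst.comp measurable_snd) (measurable_fst.comp measurable_fst))
      (measurableSet_lt (measurable_snd.comp measurable_snd) (measurable_snd.comp measurable_fst))
  have hmain : P {ω | invAux H1 t1 ω < W1 ω ∧ invAux H2 t2 ω < W2 ω}
      = ∫⁻ ω, ENNReal.ofReal (Real.exp (-(ξ1 * invAux H1 t1 ω) - ξ2 * invAux H2 t2 ω)) ∂P := by
    have h1 : P {ω | invAux H1 t1 ω < W1 ω ∧ invAux H2 t2 ω < W2 ω}
        = P.map (fun ω => ((W1 ω, W2 ω), (invAux H1 t1 ω, invAux H2 t2 ω)))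
          {p : (ℝ × ℝ) × (ℝ × ℝ) | p.2.1 < p.1.1 ∧ p.2.2 < p.1.2} := by
      rw [Measure.map_apply (by fun_prop) hSm]
      rfl
    have : IsProbabilityMeasure (P.map W1) := Measure.isProbabilityMeasure_map hW1meas.aemeasurable
    have : IsProbabilityMeasure (P.map W2) := Measure.isProbabilityMeasure_map hW2meas.aemeasurable
    rw [h1, hWL.map_prod_eq_prod_map_map (by fun_prop) (by fun_prop),
      hW12.map_prod_eq_prod_map_map (by fun_prop) (by fun_prop),
      Measure.prod_apply_symm hSm,
      lintegral_map (measurable_measure_prodMk_right hSm) (by fun_prop)]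
    apply lintegral_congr
    intro ω
    have : ((fun x : ℝ × ℝ => (x, (invAux H1 t1 ω, invAux H2 t2 ω))) ⁻¹'
        {p : (ℝ × ℝ) × (ℝ × ℝ) | p.2.1 < p.1.1 ∧ p.2.2 < p.1.2})
        = Set.Ioi (invAux H1 t1 ω) ×ˢ Set.Ioi (invAux H2 t2 ω) := by
      ext x; simp
    rw [this, Measure.prod_prod, htail W1 ξ1 hW1meas hW1exp _ (invAux_nonneg _ _ _),
      htail W2 ξ2 hW2meas hW2exp _ (invAux_nonneg _ _ _),
      ← ENNReal.ofReal_mul (Real.exp_pos _).le, ← Real.exp_add, sub_eq_add_neg]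
  rw [hset, hint, hmain, integral_eq_lintegral_of_nonneg_ae
    (Filter.Eventually.of_forall fun ω => (Real.exp_pos _).le)]
  exact Measurable.aestronglyMeasurable (by fun_prop)
end
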